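/- arXiv:1805.06278 — 13 statements merged into one kernel-verified Lean document; each statement's English description precedes it below -/
import Mathlib

section
/- Let δ ∈ (0,1), θ ∈ (0,1), a := (1-δ)/2, and let w be a real number with a ≤ w ≤ 1-a. For every finite set Y and every pair of distributions p₀, p₁ on Y satisfying ‖(1-w)p₀ - w p₁‖₁ ≤ δ, the Fisher information satisfies J_θ(p₀,p₁) ≤ (1/(θ(1-θ)))·(1 - a/(w(1-θ) + (1-w)θ)). Moreover, the pair of distributions p̄₀ := (a/(1-w), 1 - a/(1-w), 0) and p̄₁ := (a/w, 0, 1 - a/w) on a three-element set satisfies ‖(1-w)p̄₀ - w p̄₁‖₁ ≤ δ and attains this bound with equality. -/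
/-!
Write `D = w(1-θ) + (1-w)θ` and `p_θ = (1-θ)p₀ + θp₁`. The pointwise identity
`(p₁-p₀)²/p_θ = p₀/(1-θ) + p₁/θ - p₀p₁/(θ(1-θ)p_θ)` gives
`J_θ = (1 - ∑ p₀p₁/p_θ)/(θ(1-θ))`. With `x = (1-w)p₀` and `y = w p₁` one has
`p₀p₁/p_θ = xy/((1-θ)w x + θ(1-w)y) ≥ min(x,y)/D`, because the denominator is at most
`D max(x,y)`. Finally `∑ min(x,y) = (1 - ‖x-y‖₁)/2 ≥ (1-δ)/2 = a`. In the extremal pair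
the only point common to both supports has `x = y = a`, so every inequality is tight.
-/

open Finset

/-- A distribution on a finite set `Y`. -/
def IsDist {Y : Type*} [Fintype Y] (p : Y → ℝ) : Prop :=
  (∀ y, 0 ≤ p y) ∧ ∑ y, p y = 1

/-- `‖(1-w)p₀ - w p₁‖₁`. -/
noncomputable def l1W {Y : Type*} [Fintype Y] (w : ℝ) (p0 p1 : Y → ℝ) : ℝ :=
  ∑ y, |(1 - w) * p0 y - w * p1 y|

/-- The Fisher information `J_θ(p₀,p₁)`; a term is `0` whenever `p_θ(y) = 0`,
which is the Lean convention for division by zero. -/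
noncomputable def fisherInfo {Y : Type*} [Fintype Y] (θ : ℝ) (p0 p1 : Y → ℝ) : ℝ :=
  ∑ y, (p1 y - p0 y) ^ 2 / ((1 - θ) * p0 y + θ * p1 y)

/-- The pointwise bound on a Fisher information term; the expression
`((1-w)p + wq - |(1-w)p - wq|)/2` is `min((1-w)p, wq)`. -/
lemma fisher_term_le {θ w p q : ℝ} (hθ0 : 0 < θ) (hθ1 : θ < 1) (hw0 : 0 < w) (hw1 : w < 1)
    (hp : 0 ≤ p) (hq : 0 ≤ q) :
    (q - p) ^ 2 / ((1 - θ) * p + θ * q) ≤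
      1 / (θ * (1 - θ)) * (θ * p + (1 - θ) * q
        - ((1 - w) * p + w * q - |(1 - w) * p - w * q|) / 2
          / (w * (1 - θ) + (1 - w) * θ)) := by
  have hθ1' : 0 < 1 - θ := by linarith
  have hw1' : 0 < 1 - w := by linarith
  have hD : 0 < w * (1 - θ) + (1 - w) * θ := by positivity
  have hr : 0 ≤ (1 - θ) * p + θ * q := by positivity
  rcases hr.eq_or_lt with h | hr
  · have hp0 : p = 0 := by
      have : (1 - θ) * p = 0 := by
        linarith [mul_nonneg hθ1'.le hp, mul_nonneg hθ0.le hq]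
      exact (mul_eq_zero.1 this).resolve_left hθ1'.ne'
    have hq0 : q = 0 := by
      have : θ * q = 0 := by linarith [mul_nonneg hθ1'.le hp, mul_nonneg hθ0.le hq]
      exact (mul_eq_zero.1 this).resolve_left hθ0.ne'
    simp [hp0, hq0]
  · have hid : (q - p) ^ 2 / ((1 - θ) * p + θ * q)
        = 1 / (θ * (1 - θ)) * (θ * p + (1 - θ) * q - p * q / ((1 - θ) * p + θ * q)) := by
      obtain ⟨r, hrdef⟩ : ∃ r, r = (1 - θ) * p + θ * q := ⟨_, rfl⟩
      rw [← hrdef] at hr ⊢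
      field_simp
      rw [hrdef]
      ring
    have hmin : ((1 - w) * p + w * q - |(1 - w) * p - w * q|) / 2
        / (w * (1 - θ) + (1 - w) * θ) ≤ p * q / ((1 - θ) * p + θ * q) := by
      rw [div_le_div_iff₀ hD hr]
      rcases le_total ((1 - w) * p) (w * q) with h | h
      · rw [abs_of_nonpos (by linarith)]
        nlinarith [mul_nonneg (mul_nonneg hp hθ1'.le) (sub_nonneg.2 h)]
      · rw [abs_of_nonneg (by linarith)]
        nlinarith [mul_nonneg (mul_nonneg hq hθ0.le) (sub_nonneg.2 h)]
    rw [hid]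
    gcongr

lemma fisherInfo_le {Y : Type*} [Fintype Y] {θ w : ℝ} {p0 p1 : Y → ℝ}
    (hθ0 : 0 < θ) (hθ1 : θ < 1) (hw0 : 0 < w) (hw1 : w < 1)
    (h0 : IsDist p0) (h1 : IsDist p1) :
    fisherInfo θ p0 p1 ≤ 1 / (θ * (1 - θ)) *
      (1 - (1 - l1W w p0 p1) / 2 / (w * (1 - θ) + (1 - w) * θ)) := by
  refine (Finset.sum_le_sum fun y _ =>
    fisher_term_le hθ0 hθ1 hw0 hw1 (h0.1 y) (h1.1 y)).trans_eq ?_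
  simp only [← Finset.mul_sum, ← Finset.sum_div, Finset.sum_sub_distrib,
    Finset.sum_add_distrib, h0.2, h1.2, l1W]
  ring

theorem stmt0 (δ θ a w : ℝ) (hδ : δ ∈ Set.Ioo (0 : ℝ) 1) (hθ : θ ∈ Set.Ioo (0 : ℝ) 1)
    (ha : a = (1 - δ) / 2) (hw : a ≤ w) (hw' : w ≤ 1 - a) :
    (∀ (Y : Type) [Fintype Y] (p0 p1 : Y → ℝ), IsDist p0 → IsDist p1 →
        l1W w p0 p1 ≤ δ →
        fisherInfo θ p0 p1 ≤ 1 / (θ * (1 - θ)) * (1 - a / (w * (1 - θ) + (1 - w) * θ))) ∧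
    IsDist (![a / (1 - w), 1 - a / (1 - w), 0]) ∧
    IsDist (![a / w, 0, 1 - a / w]) ∧
    l1W w ![a / (1 - w), 1 - a / (1 - w), 0] ![a / w, 0, 1 - a / w] ≤ δ ∧
    fisherInfo θ ![a / (1 - w), 1 - a / (1 - w), 0] ![a / w, 0, 1 - a / w]
      = 1 / (θ * (1 - θ)) * (1 - a / (w * (1 - θ) + (1 - w) * θ)) := by
  obtain ⟨hδ0, hδ1⟩ := hδ
  obtain ⟨hθ0, hθ1⟩ := hθ
  have ha0 : 0 < a := by linarith
  have hw0 : 0 < w := by linarith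
  have hw1 : w < 1 := by linarith
  have hw1' : 0 < 1 - w := by linarith
  have hθ1' : 0 < 1 - θ := by linarith
  have hD : 0 < w * (1 - θ) + (1 - w) * θ := by positivity
  have hu : a / (1 - w) ≤ 1 := (div_le_one hw1').2 (by linarith)
  have hv : a / w ≤ 1 := (div_le_one hw0).2 hw
  have hu0 : 0 ≤ a / (1 - w) := by positivity
  have hv0 : 0 ≤ a / w := by positivity
  refine ⟨fun Y _ p0 p1 h0 h1 hl => (fisherInfo_le hθ0 hθ1 hw0 hw1 h0 h1).trans ?_,
    ⟨?_, ?_⟩, ⟨?_, ?_⟩, ?_, ?_⟩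
  · have : a ≤ (1 - l1W w p0 p1) / 2 := by linarith
    gcongr
  · intro y
    fin_cases y <;> simp [hu, hu0]
  · simp [Fin.sum_univ_three]
  · intro y
    fin_cases y <;> simp [hv, hv0]
  · simp [Fin.sum_univ_three]
  · have e0 : (1 - w) * (a / (1 - w)) = a := by field_simp
    have e1 : w * (a / w) = a := by field_simp
    have e2 : (1 - w) * (1 - a / (1 - w)) = 1 - w - a := by rw [mul_sub, e0]; ring
    have e3 : w * (1 - a / w) = w - a := by rw [mul_sub, e1]; ring
    simp only [l1W, Fin.sum_univ_three, Matrix.cons_val_zero, Matrix.cons_val_one,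
      Matrix.cons_val, e0, e1, e2, e3, mul_zero, sub_zero, zero_sub, sub_self, abs_zero, abs_neg]
    rw [abs_of_nonneg (by linarith : 0 ≤ 1 - w - a), abs_of_nonneg (by linarith : 0 ≤ w - a)]
    linarith
  · -- With `0 / 0 = 0` this also holds at `x = 0`, which occurs when `w = a` or `w = 1 - a`.
    have key : ∀ x c : ℝ, x ^ 2 / (c * x) = x / c := by
      intro x c
      rcases eq_or_ne x 0 with rfl | hx
      · simp
      · rw [pow_two, mul_div_mul_right _ _ hx]
    simp only [fisherInfo, Fin.sum_univ_three, Matrix.cons_val_zero, Matrix.cons_val_one,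
      Matrix.cons_val, mul_zero, sub_zero, zero_sub, add_zero, zero_add, neg_sq, key]
    have e : (1 - θ) * (a / (1 - w)) + θ * (a / w)
        = a * (w * (1 - θ) + (1 - w) * θ) / (w * (1 - w)) := by
      field_simp
    rw [e]
    field_simp
    ring
end

section
/- Let δ ∈ (0,1), θ ∈ (0,1), a := (1-δ)/2, w a real number with a ≤ w ≤ 1-a, and θ₀ := (w-a)/δ. Assume θ ≤ θ₀. Then over all pairs of distributions p₀, p₁ on a two-element set satisfying ‖(1-w)p₀ - w p₁‖₁ ≤ δ, the maximum of the Fisher information J_θ(p₀,p₁) equals (w-a)/(θ·(w(1-θ) + aθ)), and it is attained by p₀ := (1, 0) and p₁ := (a/w, 1 - a/w). -/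
/-!
Write `p₀ = (1 - x, x)`, `p₁ = (1 - y, y)` and `q = (1 - θ) x + θ y`, so that
`J_θ = (y - x)² / (q (1 - q))`. Exchanging the two outcomes preserves everything, so assume `x ≤ y`.
The norm constraint then gives the linear inequality `w y - (1 - w) x ≤ w - a`, and with
`B = w (1 - θ) + a θ` and `δ = 1 - 2a` the bound follows from the identity

`(w - a) q (1 - q) - θ B (y - x)² = (w - a) x (1 - y)
    + θ (y - x) (w - a - w y + (1 - w) x) + ((w - a) - θ δ) x (y - x)`,

whose right-hand terms are all nonnegative; `θ ≤ θ₀` is exactly the nonnegativity of the last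
coefficient. All three terms vanish at `x = 0`, `y = 1 - a / w`, which is the claimed maximizer.
-/

open Finset

/-- The upper bound in coordinates, for one of the two orderings of the outcomes. -/
lemma fisher_two_point_le {θ a w x y : ℝ} (hθ0 : 0 < θ) (hθ1 : θ < 1) (ha : 0 < a) (hw : a ≤ w)
    (hle : θ * (1 - 2 * a) ≤ w - a) (hx : 0 ≤ x) (hy : y ≤ 1) (hxy : x ≤ y)
    (hc : w * y - (1 - w) * x ≤ w - a) :
    (y - x) ^ 2 / ((1 - θ) * x + θ * y) + (y - x) ^ 2 / ((1 - θ) * (1 - x) + θ * (1 - y))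
      ≤ (w - a) / (θ * (w * (1 - θ) + a * θ)) := by
  have hB : 0 < w * (1 - θ) + a * θ := by
    have h1 : 0 < w * (1 - θ) := mul_pos (by linarith) (by linarith)
    have h2 : 0 < a * θ := mul_pos ha hθ0
    linarith
  have hD : 0 < θ * (w * (1 - θ) + a * θ) := mul_pos hθ0 hB
  -- If `x = y` both numerators vanish; otherwise both denominators are positive.
  rcases hxy.eq_or_lt with rfl | hlt
  · simpa using div_nonneg (sub_nonneg.2 hw) hD.le
  · have hd : 0 < y - x := sub_pos.2 hlt
    have hq : 0 < (1 - θ) * x + θ * y := by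
      have := mul_pos hθ0 hd
      linarith
    have hq' : 0 < (1 - θ) * (1 - x) + θ * (1 - y) := by
      have := mul_pos (sub_pos.2 hθ1) hd
      linarith
    have t1 : 0 ≤ (w - a) * (x * (1 - y)) :=
      mul_nonneg (by linarith) (mul_nonneg hx (by linarith))
    have t2 : 0 ≤ θ * ((y - x) * (w - a - w * y + (1 - w) * x)) :=
      mul_nonneg hθ0.le (mul_nonneg hd.le (by linarith))
    have t3 : 0 ≤ (w - a - θ * (1 - 2 * a)) * (x * (y - x)) :=
      mul_nonneg (by linarith) (mul_nonneg hx hd.le)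
    rw [div_add_div _ _ hq.ne' hq'.ne', div_le_div_iff₀ (mul_pos hq hq') hD]
    linarith

theorem stmt1 (δ θ a w θ₀ : ℝ) (hδ : δ ∈ Set.Ioo (0 : ℝ) 1) (hθ : θ ∈ Set.Ioo (0 : ℝ) 1)
    (ha : a = (1 - δ) / 2) (hw : a ≤ w) (hw' : w ≤ 1 - a)
    (hθ₀ : θ₀ = (w - a) / δ) (hle : θ ≤ θ₀) :
    (∀ p0 p1 : Fin 2 → ℝ, IsDist p0 → IsDist p1 → l1W w p0 p1 ≤ δ →
        fisherInfo θ p0 p1 ≤ (w - a) / (θ * (w * (1 - θ) + a * θ))) ∧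
    IsDist (![(1 : ℝ), 0]) ∧
    IsDist (![a / w, 1 - a / w]) ∧
    l1W w ![(1 : ℝ), 0] ![a / w, 1 - a / w] ≤ δ ∧
    fisherInfo θ ![(1 : ℝ), 0] ![a / w, 1 - a / w]
      = (w - a) / (θ * (w * (1 - θ) + a * θ)) := by
  obtain ⟨hδ0, hδ1⟩ := hδ
  obtain ⟨hθ0, hθ1⟩ := hθ
  have ha0 : 0 < a := by rw [ha]; linarith
  have hδa : δ = 1 - 2 * a := by rw [ha]; ring
  have hw0 : 0 < w := by linarith
  have hle' : θ * (1 - 2 * a) ≤ w - a := by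
    rw [← hδa]
    rwa [hθ₀, le_div_iff₀ hδ0] at hle
  have haw : a / w ≤ 1 := (div_le_one hw0).2 hw
  have hwa : w * (a / w) = a := by field_simp
  refine ⟨?_, ?_, ?_, ?_, ?_⟩
  · rintro p0 p1 ⟨hp0, hs0⟩ ⟨hp1, hs1⟩ hl
    simp only [l1W, fisherInfo, Fin.sum_univ_two] at *
    have e0 : p0 0 = 1 - p0 1 := by linarith
    have e1 : p1 0 = 1 - p1 1 := by linarith
    have n0 := hp0 0
    have n1 := hp1 0
    have m0 := hp0 1
    have m1 := hp1 1
    rw [e0] at n0 hl ⊢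
    rw [e1] at n1 hl ⊢
    rcases le_total (p0 1) (p1 1) with h | h
    · have hc : w * p1 1 - (1 - w) * p0 1 ≤ w - a := by
        have h1 := le_abs_self ((1 - w) * (1 - p0 1) - w * (1 - p1 1))
        have h2 := neg_abs_le ((1 - w) * p0 1 - w * p1 1)
        linarith
      have := fisher_two_point_le hθ0 hθ1 ha0 hw hle' m0 (by linarith) h hc
      convert this using 1
      ring
    · have hc : w * (1 - p1 1) - (1 - w) * (1 - p0 1) ≤ w - a := by
        have h1 := neg_abs_le ((1 - w) * (1 - p0 1) - w * (1 - p1 1))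
        have h2 := le_abs_self ((1 - w) * p0 1 - w * p1 1)
        linarith
      have := fisher_two_point_le hθ0 hθ1 ha0 hw hle' n0 (by linarith) (by linarith) hc
      convert this using 1
      ring
  · simp [IsDist, Fin.forall_fin_two]
  · refine ⟨?_, by simp [Fin.sum_univ_two]⟩
    simpa [Fin.forall_fin_two] using And.intro (div_nonneg ha0.le hw0.le) haw
  · simp only [l1W, Fin.sum_univ_two, Matrix.cons_val_zero, Matrix.cons_val_one]
    rw [mul_sub, hwa, abs_of_nonneg (by linarith), abs_of_nonpos (by linarith)]
    linarith
  · simp only [fisherInfo, Fin.sum_univ_two, Matrix.cons_val_zero, Matrix.cons_val_one]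
    have hB : 0 < w * (1 - θ) + a * θ := by
      have h1 : 0 < w * (1 - θ) := mul_pos hw0 (by linarith)
      have h2 : 0 < a * θ := mul_pos ha0 hθ0
      linarith
    -- `θ ≤ θ₀` forces `a < w`, so the second outcome has positive probability under `p₁`.
    have hlt : 0 < w - a := by
      have := mul_pos hθ0 hδ0
      rw [hδa] at this
      linarith
    have hq : (1 - θ) * 1 + θ * (a / w) = (w * (1 - θ) + a * θ) / w := by
      field_simp
    have hd : 1 - a / w = (w - a) / w := by field_simp
    have hd' : a / w - 1 = -((w - a) / w) := by rw [← hd]; ring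
    rw [hq, hd, hd']
    have hne := hB.ne'
    have hne' := hlt.ne'
    simp only [mul_zero, zero_add, sub_zero]
    field_simp
    ring
end

section
/- Let δ ∈ (0,1), θ ∈ (0,1), a := (1-δ)/2, w a real number with a ≤ w ≤ 1-a, and θ₀ := (w-a)/δ. Assume θ > θ₀. Then over all pairs of distributions p₀, p₁ on a two-element set satisfying ‖(1-w)p₀ - w p₁‖₁ ≤ δ, the maximum of the Fisher information J_θ(p₀,p₁) equals (1-w-a)/((1-θ)·(a(1-θ) + (1-w)θ)), and it is attained by p₀ := (a/(1-w), 1 - a/(1-w)) and p₁ := (1, 0). -/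
/-!
For binary distributions `p₀ = (x, 1 - x)`, `p₁ = (y, 1 - y)` put `d = y - x` and
`m = (1 - θ) x + θ y`; then `J_θ = d² / (m (1 - m))`, so `J_θ ≤ C` amounts to
`Q := C m (1 - m) - d² ≥ 0`. Exchanging the two outcomes, one may assume `x ≤ y`. In the error
probabilities `α = x`, `β = 1 - y`, the feasible set is then the quadrilateral `α, β ≥ 0`,
`α + β ≤ 1`, `(1 - w) α + w β ≥ a`. The function `Q` is concave in `(α, β)` (`quad_concave`), and
every feasible point lies on a segment joining feasible points of the two coordinate axes, so it is
enough to have `Q ≥ 0` on the axes (`quad_axis_alpha`, `quad_axis_beta`). There `Q` factors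
into affine functions. The value `C` is exactly what the vertex `(a / (1 - w), 0)` requires; the
vertex `(0, a / w)` requires less, because `θ > θ₀` (`vertex_compare`).
-/

open Finset

/-- `C m (1 - m) - d²` in terms of the error probabilities `α = p₀(0)` and `β = p₁(1)`, where
`m = p_θ(0)` and `d = p₁(0) - p₀(0)`. -/
noncomputable def quadGap (C θ α β : ℝ) : ℝ :=
  C * ((1 - θ) * α + θ * (1 - β)) * ((1 - θ) * (1 - α) + θ * β) - (1 - α - β) ^ 2

lemma quad_concave {C θ α β α' β' l : ℝ} (hC : 0 ≤ C) (hl : 0 ≤ l) (hl1 : l ≤ 1)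
    (h : 0 ≤ quadGap C θ α β) (h' : 0 ≤ quadGap C θ α' β') :
    0 ≤ quadGap C θ (l * α + (1 - l) * α') (l * β + (1 - l) * β') := by
  have key : quadGap C θ (l * α + (1 - l) * α') (l * β + (1 - l) * β')
      = l * quadGap C θ α β + (1 - l) * quadGap C θ α' β'
        + l * (1 - l) * (C * ((1 - θ) * (α - α') - θ * (β - β')) ^ 2
          + (α - α' + (β - β')) ^ 2) := by
    unfold quadGap; ring
  have hl' : 0 ≤ 1 - l := by linarith
  rw [key]; positivity

lemma quad_axis_alpha {C θ a w α : ℝ} (hD : 0 < a * (1 - θ) + (1 - w) * θ)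
    (hC : C * (1 - θ) * (a * (1 - θ) + (1 - w) * θ) = 1 - w - a)
    (hα : a ≤ (1 - w) * α) (hα1 : α ≤ 1) : 0 ≤ quadGap C θ α 0 := by
  have e : quadGap C θ α 0 * (a * (1 - θ) + (1 - w) * θ)
      = (1 - α) * ((1 - w) * α - a) := by
    unfold quadGap
    linear_combination ((1 - θ) * α + θ) * (1 - α) * hC
  exact nonneg_of_mul_nonneg_left
    (e ▸ mul_nonneg (sub_nonneg.2 hα1) (sub_nonneg.2 hα)) hD

lemma quad_axis_beta {C θ a w β : ℝ} (hθ : 0 < θ) (hθ1 : θ < 1)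
    (hE : 0 < a * θ + w * (1 - θ))
    (hC : w - a ≤ C * θ * (a * θ + w * (1 - θ)))
    (hβ0 : 0 ≤ β) (hβ : a ≤ w * β) (hβ1 : β ≤ 1) : 0 ≤ quadGap C θ 0 β := by
  have e : quadGap C θ 0 β * (a * θ + w * (1 - θ))
      = (1 - β) * (w * β - a) + (C * θ * (a * θ + w * (1 - θ)) - (w - a))
        * ((1 - θ + θ * β) * (1 - β)) := by
    unfold quadGap; ring
  have h1 : 0 ≤ 1 - β := by linarith
  have h2 : 0 ≤ 1 - θ + θ * β := by nlinarith
  refine nonneg_of_mul_nonneg_left (b := a * θ + w * (1 - θ)) ?_ hE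
  rw [e]
  exact add_nonneg (mul_nonneg h1 (sub_nonneg.2 hβ))
    (mul_nonneg (sub_nonneg.2 hC) (mul_nonneg h2 h1))

/-- The vertex `(0, a / w)` needs a constant no larger than the vertex `(a / (1 - w), 0)`:
the cross-multiplied difference is `a ((1 - 2a) θ - (w - a)) = a δ (θ - θ₀)`. -/
lemma vertex_compare {C θ a w : ℝ} (ha : 0 < a) (hθ1 : θ < 1)
    (hD : 0 < a * (1 - θ) + (1 - w) * θ)
    (hC : C * (1 - θ) * (a * (1 - θ) + (1 - w) * θ) = 1 - w - a)
    (hgt : w - a ≤ (1 - 2 * a) * θ) :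
    w - a ≤ C * θ * (a * θ + w * (1 - θ)) := by
  have e : (C * θ * (a * θ + w * (1 - θ)) - (w - a))
      * ((1 - θ) * (a * (1 - θ) + (1 - w) * θ)) = a * ((1 - 2 * a) * θ - (w - a)) := by
    linear_combination θ * (a * θ + w * (1 - θ)) * hC
  have h := nonneg_of_mul_nonneg_left
    (e ▸ mul_nonneg ha.le (sub_nonneg.2 hgt)) (mul_pos (sub_pos.2 hθ1) hD)
  linarith

lemma quadGap_nonneg {C θ a w α β : ℝ} (ha : 0 < a) (hw : a ≤ w) (hw' : a ≤ 1 - w)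
    (hθ : 0 < θ) (hθ1 : θ < 1)
    (hC : C * (1 - θ) * (a * (1 - θ) + (1 - w) * θ) = 1 - w - a) (hC0 : 0 ≤ C)
    (hgt : w - a ≤ (1 - 2 * a) * θ)
    (hα : 0 ≤ α) (hβ : 0 ≤ β) (hαβ : α + β ≤ 1) (hL : a ≤ (1 - w) * α + w * β) :
    0 ≤ quadGap C θ α β := by
  have hw0 : 0 < w := by linarith
  have hw1 : 0 < 1 - w := by linarith
  have hθ' : 0 < 1 - θ := by linarith
  have hD : 0 < a * (1 - θ) + (1 - w) * θ := by positivity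
  have hE : 0 < a * θ + w * (1 - θ) := by positivity
  have hCE := vertex_compare ha hθ1 hD hC hgt
  rcases le_total a (w * β + a * α) with h | h
  · -- the segment from `(1, 0)` through `(α, β)` meets the `β`-axis at `β / (1 - α) ≥ a / w`
    rcases eq_or_lt_of_le (show α ≤ 1 by linarith) with h1 | h1
    · obtain rfl : β = 0 := by linarith
      exact quad_axis_alpha hD hC (by linarith) h1.le
    · have h1' : 0 < 1 - α := by linarith
      have A : 0 ≤ quadGap C θ 1 0 := quad_axis_alpha hD hC (by linarith) le_rfl
      have B : 0 ≤ quadGap C θ 0 (β / (1 - α)) := by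
        refine quad_axis_beta hθ hθ1 hE hCE (by positivity) ?_ ?_
        · rw [← mul_div_assoc, le_div_iff₀ h1']; linarith
        · rw [div_le_one h1']; linarith
      have := quad_concave hC0 hα h1.le A B
      rwa [mul_one, mul_zero, add_zero, mul_zero, zero_add, mul_div_cancel₀ _ h1'.ne'] at this
  · -- the segment from `(0, a / w)` through `(α, β)` meets the `α`-axis at `α / l ≥ a / (1 - w)`
    set l := 1 - w * β / a with hl
    have hla : a * l = a - w * β := by rw [hl]; field_simp
    have hαl : α ≤ l := by
      by_contra! hc
      nlinarith
    rcases eq_or_lt_of_le (hα.trans hαl) with h0 | h0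
    · obtain rfl : α = 0 := by linarith
      exact quad_axis_beta hθ hθ1 hE hCE hβ (by linarith) (by linarith)
    · have hl1 : l ≤ 1 := by
        have : 0 ≤ w * β / a := by positivity
        linarith
      have A : 0 ≤ quadGap C θ (α / l) 0 := by
        refine quad_axis_alpha hD hC ?_ ?_
        · rw [← mul_div_assoc, le_div_iff₀ h0]; linarith
        · rw [div_le_one h0]; exact hαl
      have B : 0 ≤ quadGap C θ 0 (a / w) := by
        refine quad_axis_beta hθ hθ1 hE hCE (by positivity) ?_ ?_
        · rw [mul_div_cancel₀ _ hw0.ne']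
        · rw [div_le_one hw0]; exact hw
      have key := quad_concave hC0 h0.le hl1 A B
      have e1 : (1 - l) * (a / w) = β := by rw [hl]; field_simp; ring
      rwa [mul_div_cancel₀ _ h0.ne', mul_zero, add_zero, mul_zero, zero_add, e1] at key

/-- From `Q ≥ 0` to the bound on the Fisher information. When `m ∈ {0, 1}`, `Q ≥ 0` forces
`d = 0`, so both terms vanish. -/
lemma fisher_le_of_quad {C d m : ℝ} (hC : 0 ≤ C) (hm : 0 ≤ m) (hm1 : m ≤ 1)
    (h : d ^ 2 ≤ C * m * (1 - m)) : d ^ 2 / m + d ^ 2 / (1 - m) ≤ C := by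
  rcases eq_or_lt_of_le hm with h0 | h0
  · subst h0
    have : d ^ 2 = 0 := le_antisymm (by simpa using h) (sq_nonneg d)
    simpa [this] using hC
  rcases eq_or_lt_of_le hm1 with h1 | h1
  · subst h1
    have : d ^ 2 = 0 := le_antisymm (by simpa using h) (sq_nonneg d)
    simpa [this] using hC
  have h1' : 0 < 1 - m := by linarith
  have e : d ^ 2 / m + d ^ 2 / (1 - m) = d ^ 2 / (m * (1 - m)) := by
    field_simp; ring
  rw [e, div_le_iff₀ (by positivity)]
  linarith

theorem stmt2 (δ θ a w θ₀ : ℝ) (hδ : δ ∈ Set.Ioo (0 : ℝ) 1) (hθ : θ ∈ Set.Ioo (0 : ℝ) 1)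
    (ha : a = (1 - δ) / 2) (hw : a ≤ w) (hw' : w ≤ 1 - a)
    (hθ₀ : θ₀ = (w - a) / δ) (hgt : θ₀ < θ) :
    (∀ p0 p1 : Fin 2 → ℝ, IsDist p0 → IsDist p1 → l1W w p0 p1 ≤ δ →
        fisherInfo θ p0 p1 ≤ (1 - w - a) / ((1 - θ) * (a * (1 - θ) + (1 - w) * θ))) ∧
    IsDist (![a / (1 - w), 1 - a / (1 - w)]) ∧
    IsDist (![(1 : ℝ), 0]) ∧
    l1W w ![a / (1 - w), 1 - a / (1 - w)] ![(1 : ℝ), 0] ≤ δ ∧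
    fisherInfo θ ![a / (1 - w), 1 - a / (1 - w)] ![(1 : ℝ), 0]
      = (1 - w - a) / ((1 - θ) * (a * (1 - θ) + (1 - w) * θ)) := by
  obtain ⟨hδ0, hδ1⟩ := hδ
  obtain ⟨ht0, ht1⟩ := hθ
  have ha0 : 0 < a := by linarith
  have hw1 : 0 < 1 - w := by linarith
  have ht' : 0 < 1 - θ := by linarith
  have hD : 0 < a * (1 - θ) + (1 - w) * θ := by positivity
  have hq : 0 ≤ 1 - w - a := by linarith
  have hgt' : w - a ≤ (1 - 2 * a) * θ := by
    rw [hθ₀, div_lt_iff₀ hδ0] at hgt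
    have : 1 - 2 * a = δ := by linarith
    rw [this]; linarith
  refine ⟨?_, ?_, ?_, ?_, ?_⟩
  · intro p0 p1 h0 h1 hL
    set C := (1 - w - a) / ((1 - θ) * (a * (1 - θ) + (1 - w) * θ)) with hCdef
    have hC0 : 0 ≤ C := by positivity
    have hC : C * (1 - θ) * (a * (1 - θ) + (1 - w) * θ) = 1 - w - a := by
      rw [hCdef, mul_assoc, div_mul_cancel₀ _ (by positivity)]
    obtain ⟨h0n, h0s⟩ := h0
    obtain ⟨h1n, h1s⟩ := h1
    rw [Fin.sum_univ_two] at h0s h1s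
    unfold l1W at hL
    unfold fisherInfo
    rw [Fin.sum_univ_two] at hL ⊢
    have x0 := h0n 0
    have x1 := h0n 1
    have y0 := h1n 0
    have y1 := h1n 1
    have e0 : p0 1 = 1 - p0 0 := by linarith
    have e1 : p1 1 = 1 - p1 0 := by linarith
    rw [e0] at x1
    rw [e1] at y1
    rw [e0, e1] at hL ⊢
    generalize p0 0 = x at *
    generalize p1 0 = y at *
    have hm : 0 ≤ (1 - θ) * x + θ * y := by positivity
    have hm' : 0 ≤ (1 - θ) * (1 - x) + θ * (1 - y) := by positivity
    have key : (y - x) ^ 2 ≤ C * ((1 - θ) * x + θ * y) * (1 - ((1 - θ) * x + θ * y)) := by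
      rcases le_total x y with hxy | hxy
      · have hLin : a ≤ (1 - w) * x + w * (1 - y) := by
          have i1 := neg_abs_le ((1 - w) * x - w * y)
          have i2 := le_abs_self ((1 - w) * (1 - x) - w * (1 - y))
          linarith
        have := quadGap_nonneg ha0 hw (by linarith) ht0 ht1 hC hC0 hgt' x0 y1
          (by linarith) hLin
        unfold quadGap at this
        linarith
      · have hLin : a ≤ (1 - w) * (1 - x) + w * y := by
          have i1 := le_abs_self ((1 - w) * x - w * y)
          have i2 := neg_abs_le ((1 - w) * (1 - x) - w * (1 - y))
          linarith
        have := quadGap_nonneg ha0 hw (by linarith) ht0 ht1 hC hC0 hgt' x1 y0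
          (by linarith) hLin
        unfold quadGap at this
        linarith
    have := fisher_le_of_quad hC0 hm (by linarith) key
    convert this using 3 <;> ring
  · have h1 : a / (1 - w) ≤ 1 := by rw [div_le_one hw1]; linarith
    have h0 : 0 ≤ a / (1 - w) := by positivity
    refine ⟨fun i => ?_, by simp⟩
    fin_cases i
    · simpa using h0
    · simpa using h1
  · refine ⟨fun i => ?_, by simp⟩
    fin_cases i <;> simp
  · unfold l1W
    rw [Fin.sum_univ_two]
    have e : (1 - w) * (a / (1 - w)) = a := mul_div_cancel₀ _ hw1.ne'
    simp only [Matrix.cons_val_zero, Matrix.cons_val_one, mul_sub, e]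
    rw [abs_of_nonpos (by linarith), abs_of_nonneg (by linarith)]
    linarith
  · unfold fisherInfo
    rw [Fin.sum_univ_two]
    simp only [Matrix.cons_val_zero, Matrix.cons_val_one]
    -- `w = 1 - a` is the degenerate case `p₀ = p₁`, where the second denominator is `0`
    rcases eq_or_lt_of_le hq with h | h
    · have : a / (1 - w) = 1 := by rw [div_eq_one_iff_eq hw1.ne']; linarith
      rw [this, ← h]; simp
    · have e1 : (1 - θ) * (a / (1 - w)) + θ * 1
          = (a * (1 - θ) + (1 - w) * θ) / (1 - w) := by field_simp
      have e2 : 1 - a / (1 - w) = (1 - w - a) / (1 - w) := by field_simp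
      rw [e1, e2]
      have hne := h.ne'
      have hDne := hD.ne'
      have hw1ne := hw1.ne'
      have htne := ht'.ne'
      generalize hDD : a * (1 - θ) + (1 - w) * θ = D at *
      rw [mul_zero, add_zero, zero_sub, neg_sq]
      field_simp
      rw [← hDD]; ring
end

section
/- Let ψ : [0,∞)² → ℝ be a sublinear function, let δ ∈ (0,1), a := (1-δ)/2, and let w be a real number with a ≤ w ≤ 1-a. Then for every finite set Y and every pair of distributions p₀, p₁ on Y satisfying ‖(1-w)p₀ - w p₁‖₁ ≤ δ, one has Σ_{y∈Y} ψ(p₀(y), p₁(y)) ≤ ψ(a/(1-w), a/w) + (1 - a/(1-w))·ψ(1,0) + (1 - a/w)·ψ(0,1). Moreover, the right-hand side equals Σ_y ψ(p̄₀(y), p̄₁(y)) for the distributions p̄₀ := (a/(1-w), 1 - a/(1-w), 0) and p̄₁ := (a/w, 0, 1 - a/w) on a three-element set, which satisfy ‖(1-w)p̄₀ - w p̄₁‖₁ ≤ δ; hence the bound is attained whenever Y has at least three elements. -/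
/-!
Split each pair `(p₀ y, p₁ y)` into the part where the weighted masses agree, a multiple
`m y := min ((1-w) p₀ y) (w p₁ y)` of the ray `(1/(1-w), 1/w)`, plus remainders on the two axes.
Subadditivity bounds the sum of `ψ` by an affine function of `M := ∑ m y` (`Sublin.le_decomp`).
Since `∑ |u - v| = ∑ (u + v - 2 min u v)`, the constraint on the norm says exactly `M ≥ a`, and
the slope of the affine function is
`ψ(1/(1-w), 1/w) - ψ(1,0)/(1-w) - ψ(0,1)/w ≤ 0`, again by subadditivity, so `M = a` is extremal.
-/

open Finset

/-- A sublinear function `ψ : [0,∞)² → ℝ`, modelled as a function on `ℝ × ℝ`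
whose sublinearity properties are required only on nonnegative arguments. -/
def Sublin (ψ : ℝ → ℝ → ℝ) : Prop :=
  (∀ α x y : ℝ, 0 < α → 0 ≤ x → 0 ≤ y → ψ (α * x) (α * y) = α * ψ x y) ∧
  (∀ x₁ x₂ y₁ y₂ : ℝ, 0 ≤ x₁ → 0 ≤ x₂ → 0 ≤ y₁ → 0 ≤ y₂ →
      ψ (x₁ + x₂) (y₁ + y₂) ≤ ψ x₁ y₁ + ψ x₂ y₂)

/-- Homogeneity extends to the scalar `0`, because `ψ 0 0 = 2 * ψ 0 0`. -/
lemma Sublin.smul {ψ : ℝ → ℝ → ℝ} (h : Sublin ψ) {α x y : ℝ} (hα : 0 ≤ α) (hx : 0 ≤ x)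
    (hy : 0 ≤ y) : ψ (α * x) (α * y) = α * ψ x y := by
  rcases hα.eq_or_lt with rfl | hα
  · have h2 := h.1 2 0 0 (by norm_num) le_rfl le_rfl
    simp only [mul_zero] at h2
    simp only [zero_mul]
    linarith
  · exact h.1 α x y hα hx hy

/-- Subadditivity along the decomposition of `(m * c + s, m * d + t)` into a multiple of `(c, d)`
and two axis vectors. -/
lemma Sublin.le_decomp {ψ : ℝ → ℝ → ℝ} (h : Sublin ψ) {c d m s t : ℝ} (hc : 0 ≤ c) (hd : 0 ≤ d)
    (hm : 0 ≤ m) (hs : 0 ≤ s) (ht : 0 ≤ t) :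
    ψ (m * c + s) (m * d + t) ≤ m * ψ c d + s * ψ 1 0 + t * ψ 0 1 := by
  have h1 := h.2 (m * c) s (m * d) t (by positivity) hs (by positivity) ht
  have h2 := h.2 s 0 0 t hs le_rfl le_rfl ht
  have h3 := h.smul hm hc hd
  have h4 := h.smul hs zero_le_one le_rfl
  have h5 := h.smul ht le_rfl zero_le_one
  simp only [mul_one, mul_zero, add_zero, zero_add] at h2 h4 h5
  linarith

theorem stmt3 (ψ : ℝ → ℝ → ℝ) (hψ : Sublin ψ) (δ a w : ℝ)
    (hδ : δ ∈ Set.Ioo (0 : ℝ) 1) (ha : a = (1 - δ) / 2) (hw : a ≤ w) (hw' : w ≤ 1 - a) :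
    (∀ (Y : Type) [Fintype Y] (p0 p1 : Y → ℝ), IsDist p0 → IsDist p1 →
        l1W w p0 p1 ≤ δ →
        ∑ y, ψ (p0 y) (p1 y)
          ≤ ψ (a / (1 - w)) (a / w) + (1 - a / (1 - w)) * ψ 1 0 + (1 - a / w) * ψ 0 1) ∧
    IsDist (![a / (1 - w), 1 - a / (1 - w), 0]) ∧
    IsDist (![a / w, 0, 1 - a / w]) ∧
    l1W w ![a / (1 - w), 1 - a / (1 - w), 0] ![a / w, 0, 1 - a / w] ≤ δ ∧
    ∑ y, ψ (![a / (1 - w), 1 - a / (1 - w), 0] y) (![a / w, 0, 1 - a / w] y)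
      = ψ (a / (1 - w)) (a / w) + (1 - a / (1 - w)) * ψ 1 0 + (1 - a / w) * ψ 0 1 := by
  obtain ⟨hδ0, hδ1⟩ := hδ
  have ha0 : 0 < a := by linarith
  have hw0 : 0 < w := by linarith
  have hw1 : 0 < 1 - w := by linarith
  have hA : a / (1 - w) ≤ 1 := (div_le_one hw1).2 (by linarith)
  have hB : a / w ≤ 1 := (div_le_one hw0).2 hw
  have hA0 : 0 ≤ a / (1 - w) := by positivity
  have hB0 : 0 ≤ a / w := by positivity
  refine ⟨?_, ⟨?_, ?_⟩, ⟨?_, ?_⟩, ?_, ?_⟩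
  · intro Y _ p0 p1 hp0 hp1 hl
    obtain ⟨hp0, hs0⟩ := hp0
    obtain ⟨hp1, hs1⟩ := hp1
    set c : ℝ := (1 - w)⁻¹ with hc
    set d : ℝ := w⁻¹ with hd
    have hc0 : 0 ≤ c := by positivity
    have hd0 : 0 ≤ d := by positivity
    set m : Y → ℝ := fun y => min ((1 - w) * p0 y) (w * p1 y) with hm
    have hm0 : ∀ y, 0 ≤ m y := fun y =>
      le_min (mul_nonneg hw1.le (hp0 y)) (mul_nonneg hw0.le (hp1 y))
    have hmc : ∀ y, m y * c ≤ p0 y := fun y => by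
      rw [hc, ← div_eq_mul_inv, div_le_iff₀ hw1, mul_comm]
      exact min_le_left _ _
    have hmd : ∀ y, m y * d ≤ p1 y := fun y => by
      rw [hd, ← div_eq_mul_inv, div_le_iff₀ hw0, mul_comm]
      exact min_le_right _ _
    have hpt : ∀ y, ψ (p0 y) (p1 y) ≤
        m y * ψ c d + (p0 y - m y * c) * ψ 1 0 + (p1 y - m y * d) * ψ 0 1 := fun y => by
      have := hψ.le_decomp hc0 hd0 (hm0 y) (sub_nonneg.2 (hmc y)) (sub_nonneg.2 (hmd y))
      simpa only [add_sub_cancel] using this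
    have hsum := Finset.sum_le_sum fun y (_ : y ∈ Finset.univ) => hpt y
    simp only [Finset.sum_add_distrib, ← Finset.sum_mul, Finset.sum_sub_distrib, hs0, hs1] at hsum
    have hM : a ≤ ∑ y, m y := by
      have habs : l1W w p0 p1 = ∑ y, ((1 - w) * p0 y + w * p1 y - 2 * m y) := by
        refine Finset.sum_congr rfl fun y _ => ?_
        have h1 := max_sub_min_eq_abs' ((1 - w) * p0 y) (w * p1 y)
        have h2 := min_add_max ((1 - w) * p0 y) (w * p1 y)
        simp only [hm]
        linarith
      simp only [Finset.sum_sub_distrib, Finset.sum_add_distrib, ← Finset.mul_sum, hs0, hs1]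
        at habs
      linarith
    have hslope : ψ c d ≤ c * ψ 1 0 + d * ψ 0 1 := by
      have := hψ.le_decomp le_rfl le_rfl le_rfl hc0 hd0 (c := 0) (d := 0) (m := 0)
      simpa using this
    have hψa : ψ (a / (1 - w)) (a / w) = a * ψ c d := by
      rw [div_eq_mul_inv, div_eq_mul_inv]
      exact hψ.smul ha0.le hc0 hd0
    rw [hψa, div_eq_mul_inv, div_eq_mul_inv, ← hc, ← hd]
    nlinarith [mul_nonneg (sub_nonneg.2 hM) (sub_nonneg.2 hslope)]
  · intro y
    fin_cases y <;> simp [hA, hA0]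
  · simp [Fin.sum_univ_three]
  · intro y
    fin_cases y <;> simp [hB, hB0]
  · simp [Fin.sum_univ_three]
  · have e1 : (1 - w) * (a / (1 - w)) = a := mul_div_cancel₀ _ hw1.ne'
    have e2 : w * (a / w) = a := mul_div_cancel₀ _ hw0.ne'
    have e3 : |(1 - w) * (1 - a / (1 - w)) - w * 0| = 1 - w - a := by
      rw [mul_sub, e1, abs_of_nonneg] <;> linarith
    have e4 : |(1 - w) * 0 - w * (1 - a / w)| = w - a := by
      rw [mul_sub w, e2, abs_of_nonpos] <;> linarith
    have e5 : |(1 - w) * (a / (1 - w)) - w * (a / w)| = 0 := by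
      rw [e1, e2, sub_self, abs_zero]
    have key : l1W w ![a / (1 - w), 1 - a / (1 - w), 0] ![a / w, 0, 1 - a / w] =
        |(1 - w) * (a / (1 - w)) - w * (a / w)| + |(1 - w) * (1 - a / (1 - w)) - w * 0| +
          |(1 - w) * 0 - w * (1 - a / w)| := Fin.sum_univ_three _
    rw [key, e3, e4, e5]
    linarith
  · have h1 := hψ.smul (sub_nonneg.2 hA) zero_le_one le_rfl
    have h2 := hψ.smul (sub_nonneg.2 hB) le_rfl zero_le_one
    simp only [mul_one, mul_zero] at h1 h2
    rw [Fin.sum_univ_three, ← h1, ← h2]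
    rfl
end

section
/- Let δ ∈ (0,1), θ ∈ (0,1), a := (1-δ)/2, and let w be a real number with a ≤ w ≤ 1-a. Let Y be a finite set with at least three elements, and let p₀, p₁ be distributions on Y with ‖(1-w)p₀ - w p₁‖₁ ≤ δ such that J_θ(p₀,p₁) = (1/(θ(1-θ)))·(1 - a/(w(1-θ) + (1-w)θ)) (the maximum value under the constraint). Then: (i) every y ∈ Y with p₀(y)·p₁(y) > 0 satisfies (1-w)·p₀(y) = w·p₁(y); and (ii) (1-w)·Σ_{y : p₁(y)>0} p₀(y) = a and w·Σ_{y : p₀(y)>0} p₁(y) = a. -/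
/-!
Since `p_θ (θ p₀ + (1-θ) p₁) - p₀ p₁ = θ (1-θ) (p₁ - p₀)²`, summation gives
`θ (1-θ) J_θ = 1 - ∑ p₀ p₁ / p_θ`. Put `u = (1-w) p₀`, `v = w p₁` and
`D = w (1-θ) + (1-w) θ`. Then `D p₀ p₁ / p_θ` is `u v` divided by a strict convex combination of
`u` and `v`, so it is at least `min u v`, with equality only if `u = v` or `u v = 0`. On the other
hand `∑ min u v = (1 - ∑ |u - v|) / 2 ≥ (1-δ)/2 = a`. The assumed value of `J_θ` says
`∑ D p₀ p₁ / p_θ = a`, so every inequality is an equality: the pointwise ones give (i), and (ii) is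
`∑ min u v = a`, because by (i) `min u v` equals `u` where `p₁ > 0` and `v` where `p₀ > 0`, and it
vanishes where `p₁ = 0` or `p₀ = 0`.
-/

open Finset

/-- Pointwise form of `θ (1-θ) J_θ = 1 - ∑ p₀ p₁ / p_θ`; at `p = q = 0` it holds because both
divisions are by zero. -/
lemma fisher_term {θ p q : ℝ} (hθ : θ ∈ Set.Ioo (0 : ℝ) 1) (hp : 0 ≤ p) (hq : 0 ≤ q) :
    θ * (1 - θ) * ((q - p) ^ 2 / ((1 - θ) * p + θ * q))
      = θ * p + (1 - θ) * q - p * q / ((1 - θ) * p + θ * q) := by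
  obtain ⟨h0, h1⟩ := hθ
  have h1' : 0 < 1 - θ := by linarith
  rcases hp.eq_or_lt with rfl | hp
  · rcases hq.eq_or_lt with rfl | hq
    · simp
    · have : (1 - θ) * 0 + θ * q ≠ 0 := by positivity
      field_simp
      ring
  · have : (1 - θ) * p + θ * q ≠ 0 := by positivity
    field_simp
    ring

/-- The bound `min u v ≤ D p q / p_θ` for `p, q > 0`, where `u = (1-w) p` and `v = w q`, with its
equality case. -/
lemma min_le_term_pos {θ w p q : ℝ} (hθ : θ ∈ Set.Ioo (0 : ℝ) 1) (hp : 0 < p) (hq : 0 < q) :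
    min ((1 - w) * p) (w * q)
        ≤ (w * (1 - θ) + (1 - w) * θ) * (p * q / ((1 - θ) * p + θ * q)) ∧
      (min ((1 - w) * p) (w * q)
          = (w * (1 - θ) + (1 - w) * θ) * (p * q / ((1 - θ) * p + θ * q)) →
        (1 - w) * p = w * q) := by
  obtain ⟨h0, h1⟩ := hθ
  have h1' : 0 < 1 - θ := by linarith
  have hd : 0 < (1 - θ) * p + θ * q := by positivity
  rcases le_total ((1 - w) * p) (w * q) with h | h
  · rw [min_eq_left h]
    have key : (w * (1 - θ) + (1 - w) * θ) * (p * q / ((1 - θ) * p + θ * q)) - (1 - w) * p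
        = (1 - θ) * p / ((1 - θ) * p + θ * q) * (w * q - (1 - w) * p) := by
      field_simp
      ring
    have hc : 0 < (1 - θ) * p / ((1 - θ) * p + θ * q) := by positivity
    refine ⟨by nlinarith [mul_nonneg hc.le (sub_nonneg.2 h)], fun he => ?_⟩
    rw [← he, sub_self, eq_comm, mul_eq_zero] at key
    rcases key with key | key <;> linarith
  · rw [min_eq_right h]
    have key : (w * (1 - θ) + (1 - w) * θ) * (p * q / ((1 - θ) * p + θ * q)) - w * q
        = θ * q / ((1 - θ) * p + θ * q) * ((1 - w) * p - w * q) := by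
      field_simp
      ring
    have hc : 0 < θ * q / ((1 - θ) * p + θ * q) := by positivity
    refine ⟨by nlinarith [mul_nonneg hc.le (sub_nonneg.2 h)], fun he => ?_⟩
    rw [← he, sub_self, eq_comm, mul_eq_zero] at key
    rcases key with key | key <;> linarith

lemma min_le_term {θ w p q : ℝ} (hθ : θ ∈ Set.Ioo (0 : ℝ) 1) (hw : w ∈ Set.Ioo (0 : ℝ) 1)
    (hp : 0 ≤ p) (hq : 0 ≤ q) :
    min ((1 - w) * p) (w * q)
      ≤ (w * (1 - θ) + (1 - w) * θ) * (p * q / ((1 - θ) * p + θ * q)) := by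
  have hw1 : 0 ≤ 1 - w := by linarith [hw.2]
  rcases hp.eq_or_lt with rfl | hp
  · simp
  · rcases hq.eq_or_lt with rfl | hq
    · simp
    · exact (min_le_term_pos hθ hp hq).1

theorem stmt4 (δ θ a w : ℝ) (hδ : δ ∈ Set.Ioo (0 : ℝ) 1) (hθ : θ ∈ Set.Ioo (0 : ℝ) 1)
    (ha : a = (1 - δ) / 2) (hw : a ≤ w) (hw' : w ≤ 1 - a)
    (Y : Type) [Fintype Y] (hY : 3 ≤ Fintype.card Y)
    (p0 p1 : Y → ℝ) (hp0 : IsDist p0) (hp1 : IsDist p1)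
    (hcon : l1W w p0 p1 ≤ δ)
    (hmax : fisherInfo θ p0 p1
      = 1 / (θ * (1 - θ)) * (1 - a / (w * (1 - θ) + (1 - w) * θ))) :
    (∀ y, 0 < p0 y * p1 y → (1 - w) * p0 y = w * p1 y) ∧
    (1 - w) * ∑ y, (if 0 < p1 y then p0 y else 0) = a ∧
    w * ∑ y, (if 0 < p0 y then p1 y else 0) = a := by
  have ha0 : 0 < a := by linarith [hδ.2]
  have hw0 : 0 < w := by linarith
  have hw1 : 0 < 1 - w := by linarith
  have hθ0 : 0 < θ := hθ.1
  have hθ1 : 0 < 1 - θ := by linarith [hθ.2]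
  have hD : 0 < w * (1 - θ) + (1 - w) * θ := by positivity
  obtain ⟨n0, s0⟩ := hp0
  obtain ⟨n1, s1⟩ := hp1
  have hJ : θ * (1 - θ) * fisherInfo θ p0 p1
      = 1 - ∑ y, p0 y * p1 y / ((1 - θ) * p0 y + θ * p1 y) := by
    unfold fisherInfo
    rw [mul_sum, sum_congr rfl fun y _ => fisher_term hθ (n0 y) (n1 y), sum_sub_distrib,
      sum_add_distrib, ← mul_sum, ← mul_sum, s0, s1]
    ring
  have hS : ∑ y, (w * (1 - θ) + (1 - w) * θ) * (p0 y * p1 y / ((1 - θ) * p0 y + θ * p1 y)) = a := by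
    rw [← mul_sum]
    have h : ∑ y, p0 y * p1 y / ((1 - θ) * p0 y + θ * p1 y)
        = a / (w * (1 - θ) + (1 - w) * θ) := by
      rw [hmax, ← mul_assoc, mul_one_div_cancel (by positivity), one_mul] at hJ
      linarith
    rw [h, mul_div_cancel₀ _ hD.ne']
  have hM : a ≤ ∑ y, min ((1 - w) * p0 y) (w * p1 y) := by
    have h : ∑ y, min ((1 - w) * p0 y) (w * p1 y) = (1 - l1W w p0 p1) / 2 := by
      have h2 : ∀ y, min ((1 - w) * p0 y) (w * p1 y)
          = ((1 - w) * p0 y + w * p1 y - |(1 - w) * p0 y - w * p1 y|) / 2 := fun y => by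
        rcases le_total ((1 - w) * p0 y) (w * p1 y) with h | h
        · rw [min_eq_left h, abs_of_nonpos (sub_nonpos.2 h)]
          ring
        · rw [min_eq_right h, abs_of_nonneg (sub_nonneg.2 h)]
          ring
      unfold l1W
      rw [sum_congr rfl fun y _ => h2 y, ← sum_div, sum_sub_distrib, sum_add_distrib, ← mul_sum,
        ← mul_sum, s0, s1]
      ring
    rw [h]
    linarith
  have hle : ∀ y ∈ univ, min ((1 - w) * p0 y) (w * p1 y)
      ≤ (w * (1 - θ) + (1 - w) * θ) * (p0 y * p1 y / ((1 - θ) * p0 y + θ * p1 y)) :=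
    fun y _ => min_le_term hθ ⟨hw0, by linarith⟩ (n0 y) (n1 y)
  have hsum := le_antisymm (sum_le_sum hle) (hS.trans_le hM)
  have heq := (sum_eq_sum_iff_of_le hle).1 hsum
  have hi : ∀ y, 0 < p0 y → 0 < p1 y → (1 - w) * p0 y = w * p1 y := fun y h0 h1 =>
    (min_le_term_pos hθ h0 h1).2 (heq y (mem_univ y))
  refine ⟨fun y hy => ?_, ?_, ?_⟩
  · exact hi y (pos_of_mul_pos_left hy (n1 y)) (pos_of_mul_pos_right hy (n0 y))
  · rw [← hS, ← hsum, mul_sum]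
    refine sum_congr rfl fun y _ => ?_
    rcases (n1 y).eq_or_lt with h1 | h1
    · simp [← h1, mul_nonneg hw1.le (n0 y)]
    · rcases (n0 y).eq_or_lt with h0 | h0
      · simp [← h0, mul_nonneg hw0.le (n1 y)]
      · simp [h1, hi y h0 h1]
  · rw [← hS, ← hsum, mul_sum]
    refine sum_congr rfl fun y _ => ?_
    rcases (n0 y).eq_or_lt with h0 | h0
    · simp [← h0, mul_nonneg hw0.le (n1 y)]
    · rcases (n1 y).eq_or_lt with h1 | h1
      · simp [← h1, mul_nonneg hw1.le (n0 y)]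
      · simp [h0, hi y h0 h1]
end

section
/- Let δ ∈ (0,1), θ ∈ (0,1), a := (1-δ)/2, and let w be a real number with a ≤ w ≤ 1-a. Let Y be a finite set and let p₀, p₁ be distributions on Y with ‖(1-w)p₀ - w p₁‖₁ ≤ δ such that: (i) every y ∈ Y with p₀(y)·p₁(y) > 0 satisfies (1-w)·p₀(y) = w·p₁(y); and (ii) (1-w)·Σ_{y : p₁(y)>0} p₀(y) = a and w·Σ_{y : p₀(y)>0} p₁(y) = a. Then J_θ(p₀,p₁) = (1/(θ(1-θ)))·(1 - a/(w(1-θ) + (1-w)θ)), i.e., (p₀,p₁) attains the maximum Fisher information under the constraint. -/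
/-!
Pointwise, `θ(1-θ)(p₁-p₀)² = p_θ · (θ p₀ + (1-θ) p₁) - p₀ p₁`, so that
`θ(1-θ) J_θ = 1 - ∑ p₀ p₁ / p_θ`. On the common support, condition (i) says `(p₀, p₁)` is
proportional to `(w, 1-w)`, hence `p₀ p₁ / p_θ = (1-w) p₀ / (w(1-θ) + (1-w)θ)`, and condition (ii)
evaluates the sum of these terms as `a / (w(1-θ) + (1-w)θ)`.
-/

open Finset

/-- One summand of the Fisher information, linearized in `x = p₀(y)` and `z = p₁(y)`. -/
lemma fisher_term_s5 {θ w x z : ℝ} (hθ0 : 0 < θ) (hθ1 : θ < 1) (hw0 : 0 < w) (hw1 : w < 1)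
    (hx : 0 ≤ x) (hz : 0 ≤ z) (h : 0 < x * z → (1 - w) * x = w * z) :
    (z - x) ^ 2 / ((1 - θ) * x + θ * z)
      = 1 / (θ * (1 - θ)) * (θ * x + (1 - θ) * z
          - (1 - w) * (if 0 < z then x else 0) / (w * (1 - θ) + (1 - w) * θ)) := by
  have h1θ : 0 < 1 - θ := sub_pos.2 hθ1
  have h1w : 0 < 1 - w := sub_pos.2 hw1
  have hD : 0 < w * (1 - θ) + (1 - w) * θ := by positivity
  rcases hz.eq_or_lt with rfl | hz
  · rcases hx.eq_or_lt with rfl | hx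
    · simp
    · simp only [lt_irrefl, if_false]
      field_simp
      ring
  · rcases hx.eq_or_lt with rfl | hx
    · simp only [hz, if_true]
      field_simp
      ring
    · have hz' : z = (1 - w) * x / w := by
        rw [eq_div_iff hw0.ne', h (mul_pos hx hz)]
        ring
      have hp : (1 - θ) * x + θ * z = x / w * (w * (1 - θ) + (1 - w) * θ) := by
        rw [hz']
        field_simp
      rw [hp, if_pos hz, hz']
      field_simp
      ring

theorem stmt5 (δ θ a w : ℝ) (hδ : δ ∈ Set.Ioo (0 : ℝ) 1) (hθ : θ ∈ Set.Ioo (0 : ℝ) 1)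
    (ha : a = (1 - δ) / 2) (hw : a ≤ w) (hw' : w ≤ 1 - a)
    (Y : Type) [Fintype Y]
    (p0 p1 : Y → ℝ) (hp0 : IsDist p0) (hp1 : IsDist p1)
    (hcon : l1W w p0 p1 ≤ δ)
    (h1 : ∀ y, 0 < p0 y * p1 y → (1 - w) * p0 y = w * p1 y)
    (h2 : (1 - w) * ∑ y, (if 0 < p1 y then p0 y else 0) = a)
    (h3 : w * ∑ y, (if 0 < p0 y then p1 y else 0) = a) :
    fisherInfo θ p0 p1
      = 1 / (θ * (1 - θ)) * (1 - a / (w * (1 - θ) + (1 - w) * θ)) := by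
  obtain ⟨hδ0, hδ1⟩ := hδ
  have ha0 : 0 < a := by linarith
  have hterm := fun y => fisher_term_s5 hθ.1 hθ.2 (by linarith : 0 < w) (by linarith : w < 1)
    (hp0.1 y) (hp1.1 y) (h1 y)
  unfold fisherInfo
  rw [sum_congr rfl fun y _ => hterm y, ← mul_sum, sum_sub_distrib, sum_add_distrib,
    ← mul_sum, ← mul_sum, ← sum_div, ← mul_sum, h2, hp0.2, hp1.2]
  ring
end

section
/- Let δ ∈ (0,1), θ ∈ (0,1), a := (1-δ)/2, and let w, w' be two distinct real numbers, each lying in [a, 1-a]. Let Y be a finite set with at least three elements. Then there is no pair of distributions p₀, p₁ on Y such that simultaneously: ‖(1-w)p₀ - w p₁‖₁ ≤ δ with J_θ(p₀,p₁) = (1/(θ(1-θ)))·(1 - a/(w(1-θ) + (1-w)θ)), and ‖(1-w')p₀ - w' p₁‖₁ ≤ δ with J_θ(p₀,p₁) = (1/(θ(1-θ)))·(1 - a/(w'(1-θ) + (1-w')θ)). That is, no single pair achieves the constrained maximum of the Fisher information for two distinct weights. -/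
/-!
The claimed maximum is `(1 - a / (θ + w (1 - 2θ))) / (θ (1 - θ))`, which for `θ ≠ 1/2` is injective
in `w` (as `a > 0`), so two distinct weights cannot both give the value `J_θ(p₀, p₁)`.

For `θ = 1/2` the value is `4 - 8a` whatever the weight, and one has to use the case of equality.
Put `h(y) = p₀(y) p₁(y) / (p₀(y) + p₁(y))`. Then `J_{1/2} = 4 - 8 ∑ h`, so `∑ h = a`, while the
constraint `‖(1-w)p₀ - w p₁‖₁ ≤ δ` says `∑ min((1-w)p₀, w p₁) ≥ a`. Pointwise
`min((1-w)p₀, w p₁) ≤ h` (`abs_ge_harm`), so equality holds at every `y`, which forces `h(y) = 0` or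
`p₁(y) = (1-w)(p₀(y) + p₁(y))` (`harm_eq_zero_or`). The second alternative cannot hold for two
distinct weights unless `p₀(y) + p₁(y) = 0`, so `h = 0` identically, contradicting `∑ h = a > 0`.
-/

open Finset

/-- Equivalent to `min((1-w)p, wq) ≤ pq/(p+q)`. When `q ≤ (1-w)(p+q)` this holds because
`wq ≤ pq/(p+q)`, and otherwise because `(1-w)p ≤ pq/(p+q)`. -/
lemma abs_ge_harm (w p q : ℝ) (hp : 0 ≤ p) (hq : 0 ≤ q) :
    (1 - w) * p + w * q - 2 * (p * q / (p + q)) ≤ |(1 - w) * p - w * q| := by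
  rcases (add_nonneg hp hq).eq_or_lt with h | h
  · obtain rfl : p = 0 := by linarith
    obtain rfl : q = 0 := by linarith
    simp
  rcases le_total q ((1 - w) * (p + q)) with hr | hr
  · have : w * q ≤ p * q / (p + q) := by
      rw [le_div_iff₀ h]
      nlinarith
    linarith [le_abs_self ((1 - w) * p - w * q)]
  · have : (1 - w) * p ≤ p * q / (p + q) := by
      rw [le_div_iff₀ h]
      nlinarith
    linarith [neg_abs_le ((1 - w) * p - w * q)]

/-- The equality case of `abs_ge_harm`. -/
lemma harm_eq_zero_or (w p q : ℝ) (hp : 0 ≤ p) (hq : 0 ≤ q)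
    (heq : (1 - w) * p + w * q - 2 * (p * q / (p + q)) = |(1 - w) * p - w * q|) :
    p * q / (p + q) = 0 ∨ q = (1 - w) * (p + q) := by
  rcases (add_nonneg hp hq).eq_or_lt with h | h
  · left
    rw [← h, div_zero]
  have key : p * q / (p + q) = w * q ∨ p * q / (p + q) = (1 - w) * p := by
    rcases abs_choice ((1 - w) * p - w * q) with h' | h' <;> rw [h'] at heq
    · left; linarith
    · right; linarith
  rcases key with h' | h' <;> have h2 := h' <;> rw [div_eq_iff h.ne'] at h2
  · have h3 : q * (q - (1 - w) * (p + q)) = 0 := by linear_combination -h2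
    rcases mul_eq_zero.1 h3 with h4 | h4
    · left; simp [h4]
    · right; linarith
  · have h3 : p * (q - (1 - w) * (p + q)) = 0 := by linear_combination h2
    rcases mul_eq_zero.1 h3 with h4 | h4
    · left; simp [h4]
    · right; linarith

lemma fisher_term_half (p q : ℝ) (hp : 0 ≤ p) (hq : 0 ≤ q) :
    (q - p) ^ 2 / ((1 - 1 / 2) * p + 1 / 2 * q) = 2 * p + 2 * q - 8 * (p * q / (p + q)) := by
  rcases (add_nonneg hp hq).eq_or_lt with h | h
  · obtain rfl : p = 0 := by linarith
    obtain rfl : q = 0 := by linarith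
    simp
  have e : (1 - 1 / 2) * p + 1 / 2 * q = (p + q) / 2 := by ring
  rw [e]
  field_simp
  ring

/-- If `∑ h = a`, the `ℓ¹` constraint with `δ = 1 - 2a` forces equality in `abs_ge_harm` at
every point. -/
lemma pointwise_eq {Y : Type*} [Fintype Y] (w a : ℝ) (p0 p1 : Y → ℝ) (h0 : IsDist p0)
    (h1 : IsDist p1) (hH : ∑ y, p0 y * p1 y / (p0 y + p1 y) = a)
    (hl : l1W w p0 p1 ≤ 1 - 2 * a) (y : Y) :
    p0 y * p1 y / (p0 y + p1 y) = 0 ∨ p1 y = (1 - w) * (p0 y + p1 y) := by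
  have hle : ∀ y ∈ univ, (1 - w) * p0 y + w * p1 y - 2 * (p0 y * p1 y / (p0 y + p1 y))
      ≤ |(1 - w) * p0 y - w * p1 y| := fun y _ => abs_ge_harm w _ _ (h0.1 y) (h1.1 y)
  have hs : ∑ y, ((1 - w) * p0 y + w * p1 y - 2 * (p0 y * p1 y / (p0 y + p1 y))) = 1 - 2 * a := by
    rw [sum_sub_distrib, sum_add_distrib, ← mul_sum, ← mul_sum, ← mul_sum, h0.2, h1.2, hH]
    ring
  have heq := (sum_eq_sum_iff_of_le hle).1 (le_antisymm (sum_le_sum hle) (hs ▸ hl))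
  exact harm_eq_zero_or w _ _ (h0.1 y) (h1.1 y) (heq y (mem_univ y))

theorem stmt6 (δ θ a w w' : ℝ) (hδ : δ ∈ Set.Ioo (0 : ℝ) 1) (hθ : θ ∈ Set.Ioo (0 : ℝ) 1)
    (ha : a = (1 - δ) / 2) (hww' : w ≠ w')
    (hw : a ≤ w) (hw1 : w ≤ 1 - a) (hw' : a ≤ w') (hw'1 : w' ≤ 1 - a)
    (Y : Type) [Fintype Y] (hY : 3 ≤ Fintype.card Y) :
    ¬ ∃ p0 p1 : Y → ℝ, IsDist p0 ∧ IsDist p1 ∧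
        (l1W w p0 p1 ≤ δ ∧
          fisherInfo θ p0 p1
            = 1 / (θ * (1 - θ)) * (1 - a / (w * (1 - θ) + (1 - w) * θ))) ∧
        (l1W w' p0 p1 ≤ δ ∧
          fisherInfo θ p0 p1
            = 1 / (θ * (1 - θ)) * (1 - a / (w' * (1 - θ) + (1 - w') * θ))) := by
  rintro ⟨p0, p1, h0, h1, ⟨hl, hJ⟩, hl', hJ'⟩
  obtain ⟨hδ0, hδ1⟩ := hδ
  obtain ⟨hθ0, hθ1⟩ := hθ
  have ha0 : 0 < a := by linarith
  have hpos : ∀ v, a ≤ v → v ≤ 1 - a → 0 < v * (1 - θ) + (1 - v) * θ := fun v h h' =>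
    add_pos (mul_pos (by linarith) (by linarith)) (mul_pos (by linarith) hθ0)
  have hD := hpos w hw hw1
  have hD' := hpos w' hw' hw'1
  have hc : 1 / (θ * (1 - θ)) ≠ 0 :=
    one_div_ne_zero (mul_pos hθ0 (by linarith)).ne'
  have hE := mul_left_cancel₀ hc (hJ.symm.trans hJ')
  have hE2 : a / (w * (1 - θ) + (1 - w) * θ) = a / (w' * (1 - θ) + (1 - w') * θ) := by linarith
  rw [div_eq_div_iff hD.ne' hD'.ne'] at hE2
  have hE3 := mul_left_cancel₀ ha0.ne' hE2
  have hE4 : (w - w') * (1 - 2 * θ) = 0 := by linear_combination -hE3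
  have hhalf : θ = 1 / 2 := by
    rcases mul_eq_zero.1 hE4 with h | h
    · exact absurd (sub_eq_zero.1 h) hww'
    · linarith
  subst hhalf
  have hH : ∑ y, p0 y * p1 y / (p0 y + p1 y) = a := by
    have hF : fisherInfo (1 / 2) p0 p1 = 4 - 8 * ∑ y, p0 y * p1 y / (p0 y + p1 y) := by
      unfold fisherInfo
      rw [sum_congr rfl fun y _ => fisher_term_half _ _ (h0.1 y) (h1.1 y), sum_sub_distrib,
        sum_add_distrib, ← mul_sum, ← mul_sum, ← mul_sum, h0.2, h1.2]
      ring
    have e : w * (1 - 1 / 2) + (1 - w) * (1 / 2) = 1 / 2 := by ring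
    rw [hF, e] at hJ
    norm_num at hJ
    linarith
  have hz : ∑ y, p0 y * p1 y / (p0 y + p1 y) = 0 := by
    refine sum_eq_zero fun y _ => ?_
    rcases pointwise_eq w a p0 p1 h0 h1 hH (by linarith) y with h | h
    · exact h
    rcases pointwise_eq w' a p0 p1 h0 h1 hH (by linarith) y with h' | h'
    · exact h'
    have hm : (w - w') * (p0 y + p1 y) = 0 := by linear_combination h - h'
    rcases mul_eq_zero.1 hm with h2 | h2
    · exact absurd (sub_eq_zero.1 h2) hww'
    · rw [h2, div_zero]
  linarith
end

section
/- Let Y be a finite set, let q₀, q₁, q₀', q₁' be distributions on Y, and let θ, t ∈ (0,1). Then J_θ((1-t)q₀ + t q₀', (1-t)q₁ + t q₁') = (1-t)·J_θ(q₀,q₁) + t·J_θ(q₀',q₁') holds if and only if for every y ∈ Y one has q₁(y)·q₀'(y) - q₀(y)·q₁'(y) = 0. -/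
/-!
Each summand `(p₁ - p₀)² / p_θ` is a quadratic-over-linear function, hence jointly convex, and its
convexity gap along a segment is explicit. With `s = (1-θ)a₀ + θa₁`, `r = (1-θ)b₀ + θb₁`, the gap is
`t(1-t) ((a₁-a₀) r - (b₁-b₀) s)² / (s r ((1-t)s + t r))`, and
`(a₁-a₀) r - (b₁-b₀) s = a₁b₀ - a₀b₁` for every `θ` (`fisher_term_gap`).
The gap is nonnegative and vanishes exactly when `a₁b₀ - a₀b₁` does (`fisher_term_gap_nonneg`,
`fisher_term_gap_eq_zero_iff`). Equality of the Fisher informations says that the gaps sum to zero,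
i.e. that each of them is zero.
-/

open Finset

lemma mix_pos_or_eq_zero {a0 a1 θ : ℝ} (h0 : 0 ≤ a0) (h1 : 0 ≤ a1)
    (hθ : θ ∈ Set.Ioo (0 : ℝ) 1) : 0 < (1 - θ) * a0 + θ * a1 ∨ (a0 = 0 ∧ a1 = 0) := by
  obtain ⟨hθ0, hθ1⟩ := hθ
  have hθ1' : 0 < 1 - θ := sub_pos.2 hθ1
  rcases h0.eq_or_lt with h0 | h0
  · rcases h1.eq_or_lt with h1 | h1
    · exact Or.inr ⟨h0.symm, h1.symm⟩
    · left; subst h0; simpa using mul_pos hθ0 h1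
  · left; positivity

/-- The defect of convexity of one summand of the Fisher information along the segment from
`(a0, a1)` to `(b0, b1)`. -/
noncomputable def termGap (θ t a0 a1 b0 b1 : ℝ) : ℝ :=
  (1 - t) * ((a1 - a0) ^ 2 / ((1 - θ) * a0 + θ * a1))
    + t * ((b1 - b0) ^ 2 / ((1 - θ) * b0 + θ * b1))
    - (((1 - t) * a1 + t * b1) - ((1 - t) * a0 + t * b0)) ^ 2
      / ((1 - θ) * ((1 - t) * a0 + t * b0) + θ * ((1 - t) * a1 + t * b1))

/-- Closed form of the gap. It remains true when a denominator vanishes: then `a0 = a1 = 0` or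
`b0 = b1 = 0`, and both sides are `0`. -/
lemma fisher_term_gap {θ t a0 a1 b0 b1 : ℝ} (hθ : θ ∈ Set.Ioo (0 : ℝ) 1)
    (ht : t ∈ Set.Ioo (0 : ℝ) 1) (ha0 : 0 ≤ a0) (ha1 : 0 ≤ a1) (hb0 : 0 ≤ b0) (hb1 : 0 ≤ b1) :
    termGap θ t a0 a1 b0 b1 = t * (1 - t) * (a1 * b0 - a0 * b1) ^ 2
      / (((1 - θ) * a0 + θ * a1) * ((1 - θ) * b0 + θ * b1)
        * ((1 - t) * ((1 - θ) * a0 + θ * a1) + t * ((1 - θ) * b0 + θ * b1))) := by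
  have ht0 : 0 < t := ht.1
  have ht1 : 0 < 1 - t := sub_pos.2 ht.2
  have hcross : a1 * b0 - a0 * b1
      = (a1 - a0) * ((1 - θ) * b0 + θ * b1) - (b1 - b0) * ((1 - θ) * a0 + θ * a1) := by ring
  have hmix : (1 - θ) * ((1 - t) * a0 + t * b0) + θ * ((1 - t) * a1 + t * b1)
      = (1 - t) * ((1 - θ) * a0 + θ * a1) + t * ((1 - θ) * b0 + θ * b1) := by ring
  unfold termGap
  rw [hmix, hcross]
  have hs := mix_pos_or_eq_zero ha0 ha1 hθ
  have hr := mix_pos_or_eq_zero hb0 hb1 hθ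
  rcases hs with hs | ⟨rfl, rfl⟩
  · rcases hr with hr | ⟨rfl, rfl⟩
    · generalize (1 - θ) * a0 + θ * a1 = s at *
      generalize (1 - θ) * b0 + θ * b1 = r at *
      have hm : 0 < (1 - t) * s + t * r := by positivity
      have hm' := hm.ne'
      field_simp
      ring
    · generalize (1 - θ) * a0 + θ * a1 = s at *
      simp only [mul_zero, add_zero, sub_zero, zero_mul, div_zero]
      have := ht1.ne'
      field_simp
      ring
  · rcases hr with hr | ⟨rfl, rfl⟩
    · generalize (1 - θ) * b0 + θ * b1 = r at *
      simp only [mul_zero, zero_add, sub_zero, zero_mul, div_zero]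
      field_simp
      ring
    · simp

lemma fisher_term_gap_nonneg {θ t a0 a1 b0 b1 : ℝ} (hθ : θ ∈ Set.Ioo (0 : ℝ) 1)
    (ht : t ∈ Set.Ioo (0 : ℝ) 1) (ha0 : 0 ≤ a0) (ha1 : 0 ≤ a1) (hb0 : 0 ≤ b0) (hb1 : 0 ≤ b1) :
    0 ≤ termGap θ t a0 a1 b0 b1 := by
  rw [fisher_term_gap hθ ht ha0 ha1 hb0 hb1]
  have ht0 : 0 < t := ht.1
  have ht1 : 0 < 1 - t := sub_pos.2 ht.2
  have hθ0 : 0 < θ := hθ.1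
  have hθ1 : 0 < 1 - θ := sub_pos.2 hθ.2
  positivity

lemma fisher_term_gap_eq_zero_iff {θ t a0 a1 b0 b1 : ℝ} (hθ : θ ∈ Set.Ioo (0 : ℝ) 1)
    (ht : t ∈ Set.Ioo (0 : ℝ) 1) (ha0 : 0 ≤ a0) (ha1 : 0 ≤ a1) (hb0 : 0 ≤ b0) (hb1 : 0 ≤ b1) :
    termGap θ t a0 a1 b0 b1 = 0 ↔ a1 * b0 - a0 * b1 = 0 := by
  rw [fisher_term_gap hθ ht ha0 ha1 hb0 hb1]
  have ht0 : 0 < t := ht.1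
  have ht1 : 0 < 1 - t := sub_pos.2 ht.2
  rcases mix_pos_or_eq_zero ha0 ha1 hθ with hs | ⟨rfl, rfl⟩
  · rcases mix_pos_or_eq_zero hb0 hb1 hθ with hr | ⟨rfl, rfl⟩
    · have hm : 0 < (1 - t) * ((1 - θ) * a0 + θ * a1) + t * ((1 - θ) * b0 + θ * b1) :=
        add_pos (mul_pos ht1 hs) (mul_pos ht0 hr)
      rw [div_eq_zero_iff, or_iff_left (mul_pos (mul_pos hs hr) hm).ne',
        mul_eq_zero, or_iff_right (mul_pos ht0 ht1).ne', sq_eq_zero_iff]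
    · simp
  · simp

theorem stmt7 (Y : Type) [Fintype Y] (q0 q1 q0' q1' : Y → ℝ)
    (hq0 : IsDist q0) (hq1 : IsDist q1) (hq0' : IsDist q0') (hq1' : IsDist q1')
    (θ t : ℝ) (hθ : θ ∈ Set.Ioo (0 : ℝ) 1) (ht : t ∈ Set.Ioo (0 : ℝ) 1) :
    fisherInfo θ (fun y => (1 - t) * q0 y + t * q0' y) (fun y => (1 - t) * q1 y + t * q1' y)
        = (1 - t) * fisherInfo θ q0 q1 + t * fisherInfo θ q0' q1'
      ↔ ∀ y, q1 y * q0' y - q0 y * q1' y = 0 := by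
  have hsum : (1 - t) * fisherInfo θ q0 q1 + t * fisherInfo θ q0' q1'
      - fisherInfo θ (fun y => (1 - t) * q0 y + t * q0' y) (fun y => (1 - t) * q1 y + t * q1' y)
      = ∑ y, termGap θ t (q0 y) (q1 y) (q0' y) (q1' y) := by
    simp only [fisherInfo, termGap, Finset.mul_sum, Finset.sum_add_distrib,
      Finset.sum_sub_distrib]
  rw [eq_comm, ← sub_eq_zero, hsum, Finset.sum_eq_zero_iff_of_nonneg fun y _ =>
    fisher_term_gap_nonneg hθ ht (hq0.1 y) (hq1.1 y) (hq0'.1 y) (hq1'.1 y)]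
  simp only [Finset.mem_univ, true_imp_iff, fisher_term_gap_eq_zero_iff hθ ht (hq0.1 _) (hq1.1 _)
    (hq0'.1 _) (hq1'.1 _)]
end

section
/- Let f : (0,∞) → ℝ be a convex function, let δ, θ₁, θ₂ ∈ (0,1), a := (1-δ)/2, and let w be a real number with a ≤ w ≤ 1-a. Then over all pairs of distributions p₀, p₁ on a finite set Y with at least three elements satisfying ‖(1-w)p₀ - w p₁‖₁ ≤ δ, the maximum of the f-divergence D_f(p_{θ₁}‖p_{θ₂}) equals a·((1-θ₂)/(1-w) + θ₂/w)·f( ((1-θ₁)w + θ₁(1-w)) / ((1-θ₂)w + θ₂(1-w)) ) + (1 - a/(1-w))·(1-θ₂)·f((1-θ₁)/(1-θ₂)) + (1 - a/w)·θ₂·f(θ₁/θ₂), and it is attained by the pair p̄₀ := (a/(1-w), 1 - a/(1-w), 0), p̄₁ := (a/w, 0, 1 - a/w) supported on three elements of Y. -/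
/-!
Put `G(u, v) = ((1-θ₂)u + θ₂v) f(((1-θ₁)u + θ₁v) / ((1-θ₂)u + θ₂v))`, so that the divergence is
`∑ y, G(p₀ y, p₁ y)`. As a perspective of a convex function, `G` is positively homogeneous and
subadditive on the quadrant `u, v ≥ 0`. With `m = min((1-w)u, wv)`, the decomposition
`(u, v) = m (1/(1-w), 1/w) + (u - m/(1-w)) (1, 0) + (v - m/w) (0, 1)` has nonnegative
coefficients, hence bounds `G(u, v)`. Summing over `y` gives
`M K + (1 - M/(1-w)) G(1, 0) + (1 - M/w) G(0, 1)`, where `K = G(1/(1-w), 1/w)` and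
`M = ∑ m = (1 - ‖(1-w)p₀ - wp₁‖₁)/2 ≥ a`. Since `K ≤ G(1, 0)/(1-w) + G(0, 1)/w`, this is
nonincreasing in `M`, and its value at `M = a` is the claimed maximum. The extremal pair places
exactly these three directions at three separate points.
-/

open Finset

/-- The mixture `p_θ := (1-θ)p₀ + θ p₁`. -/
noncomputable def mix {Y : Type*} (θ : ℝ) (p0 p1 : Y → ℝ) : Y → ℝ :=
  fun y => (1 - θ) * p0 y + θ * p1 y

/-- The `f`-divergence `D_f(q₁‖q₂)`; a term is `0` whenever `q₂ y = 0`
(it is then `0 * f(junk) = 0`, matching the convention). -/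
noncomputable def fDiv {Y : Type*} [Fintype Y] (f : ℝ → ℝ) (q1 q2 : Y → ℝ) : ℝ :=
  ∑ y, q2 y * f (q1 y / q2 y)

/-- The contribution of a point carrying masses `u = p₀ y` and `v = p₁ y` to
`D_f(p_{θ₁}‖p_{θ₂})`. -/
noncomputable def divTerm (f : ℝ → ℝ) (θ₁ θ₂ u v : ℝ) : ℝ :=
  ((1 - θ₂) * u + θ₂ * v) * f (((1 - θ₁) * u + θ₁ * v) / ((1 - θ₂) * u + θ₂ * v))

theorem divTerm_smul (f : ℝ → ℝ) (θ₁ θ₂ c u v : ℝ) :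
    divTerm f θ₁ θ₂ (c * u) (c * v) = c * divTerm f θ₁ θ₂ u v := by
  unfold divTerm
  rcases eq_or_ne c 0 with rfl | hc
  · simp
  · rw [show (1 - θ₁) * (c * u) + θ₁ * (c * v) = c * ((1 - θ₁) * u + θ₁ * v) by ring,
      show (1 - θ₂) * (c * u) + θ₂ * (c * v) = c * ((1 - θ₂) * u + θ₂ * v) by ring,
      mul_div_mul_left _ _ hc]
    ring

theorem perspective_add_le {f : ℝ → ℝ} (hf : ConvexOn ℝ (Set.Ioi (0 : ℝ)) f)
    {x s y t : ℝ} (hx : 0 < x) (hs : 0 < s) (hy : 0 < y) (ht : 0 < t) :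
    (s + t) * f ((x + y) / (s + t)) ≤ s * f (x / s) + t * f (y / t) := by
  have hst : 0 < s + t := by positivity
  have h := hf.2 (show x / s ∈ Set.Ioi (0 : ℝ) from div_pos hx hs)
    (show y / t ∈ Set.Ioi (0 : ℝ) from div_pos hy ht)
    (show 0 ≤ s / (s + t) by positivity) (show 0 ≤ t / (s + t) by positivity)
    (by field_simp)
  simp only [smul_eq_mul] at h
  rw [show s / (s + t) * (x / s) + t / (s + t) * (y / t) = (x + y) / (s + t) by
    field_simp] at h
  calc (s + t) * f ((x + y) / (s + t))
      ≤ (s + t) * (s / (s + t) * f (x / s) + t / (s + t) * f (y / t)) :=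
        mul_le_mul_of_nonneg_left h hst.le
    _ = s * f (x / s) + t * f (y / t) := by field_simp

theorem mix_pos {θ u v : ℝ} (hθ : θ ∈ Set.Ioo (0 : ℝ) 1) (hu : 0 ≤ u) (hv : 0 ≤ v)
    (h : ¬(u = 0 ∧ v = 0)) : 0 < (1 - θ) * u + θ * v := by
  have h1 : 0 < 1 - θ := by linarith [hθ.2]
  have h2 := hθ.1
  rcases hu.eq_or_lt with rfl | hu
  · have : 0 < v := lt_of_le_of_ne hv fun hv0 => h ⟨rfl, hv0.symm⟩
    positivity
  · positivity

theorem divTerm_add_le {f : ℝ → ℝ} (hf : ConvexOn ℝ (Set.Ioi (0 : ℝ)) f)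
    {θ₁ θ₂ u v u' v' : ℝ} (hθ₁ : θ₁ ∈ Set.Ioo (0 : ℝ) 1) (hθ₂ : θ₂ ∈ Set.Ioo (0 : ℝ) 1)
    (hu : 0 ≤ u) (hv : 0 ≤ v) (hu' : 0 ≤ u') (hv' : 0 ≤ v') :
    divTerm f θ₁ θ₂ (u + u') (v + v') ≤ divTerm f θ₁ θ₂ u v + divTerm f θ₁ θ₂ u' v' := by
  by_cases h : u = 0 ∧ v = 0
  · obtain ⟨rfl, rfl⟩ := h
    simp [divTerm]
  by_cases h' : u' = 0 ∧ v' = 0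
  · obtain ⟨rfl, rfl⟩ := h'
    simp [divTerm]
  have := perspective_add_le hf (mix_pos hθ₁ hu hv h) (mix_pos hθ₂ hu hv h)
    (mix_pos hθ₁ hu' hv' h') (mix_pos hθ₂ hu' hv' h')
  unfold divTerm
  convert this using 2
  · ring
  · congr 2 <;> ring

/-- Subadditivity along the three directions `(1/(1-w), 1/w)`, `(1, 0)` and `(0, 1)`. -/
theorem divTerm_three_le {f : ℝ → ℝ} (hf : ConvexOn ℝ (Set.Ioi (0 : ℝ)) f)
    {θ₁ θ₂ w m b c : ℝ} (hθ₁ : θ₁ ∈ Set.Ioo (0 : ℝ) 1) (hθ₂ : θ₂ ∈ Set.Ioo (0 : ℝ) 1)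
    (hw : 0 < w) (hw' : 0 < 1 - w) (hm : 0 ≤ m) (hb : 0 ≤ b) (hc : 0 ≤ c) :
    divTerm f θ₁ θ₂ (m / (1 - w) + b) (m / w + c)
      ≤ m * divTerm f θ₁ θ₂ (1 / (1 - w)) (1 / w)
        + b * divTerm f θ₁ θ₂ 1 0 + c * divTerm f θ₁ θ₂ 0 1 := by
  have h1 := divTerm_add_le hf hθ₁ hθ₂ (show 0 ≤ m / (1 - w) by positivity)
    (show 0 ≤ m / w by positivity) hb hc
  have h2 := divTerm_add_le hf hθ₁ hθ₂ hb le_rfl le_rfl hc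
  have e1 := divTerm_smul f θ₁ θ₂ m (1 / (1 - w)) (1 / w)
  have e2 := divTerm_smul f θ₁ θ₂ b 1 0
  have e3 := divTerm_smul f θ₁ θ₂ c 0 1
  simp only [mul_one_div, mul_one, mul_zero, add_zero, zero_add] at e1 e2 e3 h2
  linarith

theorem divTerm_center (f : ℝ → ℝ) (θ₁ θ₂ : ℝ) {w : ℝ} (hw : 0 < w) (hw' : 0 < 1 - w) :
    divTerm f θ₁ θ₂ (1 / (1 - w)) (1 / w) = ((1 - θ₂) / (1 - w) + θ₂ / w)
      * f (((1 - θ₁) * w + θ₁ * (1 - w)) / ((1 - θ₂) * w + θ₂ * (1 - w))) := by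
  have h : ∀ θ : ℝ, (1 - θ) * (1 / (1 - w)) + θ * (1 / w)
      = ((1 - θ) * w + θ * (1 - w)) / (w * (1 - w)) := by
    intro θ
    field_simp
  have h' : (1 - θ₂) / (1 - w) + θ₂ / w
      = ((1 - θ₂) * w + θ₂ * (1 - w)) / (w * (1 - w)) := by
    field_simp
  unfold divTerm
  rw [h, h, h', div_div_div_cancel_right₀ (mul_pos hw hw').ne']

theorem stmt8 (f : ℝ → ℝ) (hf : ConvexOn ℝ (Set.Ioi (0 : ℝ)) f)
    (δ θ₁ θ₂ a w : ℝ) (hδ : δ ∈ Set.Ioo (0 : ℝ) 1)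
    (hθ₁ : θ₁ ∈ Set.Ioo (0 : ℝ) 1) (hθ₂ : θ₂ ∈ Set.Ioo (0 : ℝ) 1)
    (ha : a = (1 - δ) / 2) (hw : a ≤ w) (hw' : w ≤ 1 - a)
    (Y : Type) [Fintype Y] [DecidableEq Y] (hY : 3 ≤ Fintype.card Y) :
    (∀ p0 p1 : Y → ℝ, IsDist p0 → IsDist p1 → l1W w p0 p1 ≤ δ →
        fDiv f (mix θ₁ p0 p1) (mix θ₂ p0 p1)
          ≤ a * ((1 - θ₂) / (1 - w) + θ₂ / w)
              * f (((1 - θ₁) * w + θ₁ * (1 - w)) / ((1 - θ₂) * w + θ₂ * (1 - w)))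
            + (1 - a / (1 - w)) * (1 - θ₂) * f ((1 - θ₁) / (1 - θ₂))
            + (1 - a / w) * θ₂ * f (θ₁ / θ₂)) ∧
    (∀ y₁ y₂ y₃ : Y, y₁ ≠ y₂ → y₁ ≠ y₃ → y₂ ≠ y₃ →
      ∀ pb0 pb1 : Y → ℝ,
        pb0 = (fun y => if y = y₁ then a / (1 - w) else if y = y₂ then 1 - a / (1 - w) else 0) →
        pb1 = (fun y => if y = y₁ then a / w else if y = y₃ then 1 - a / w else 0) →
        IsDist pb0 ∧ IsDist pb1 ∧ l1W w pb0 pb1 ≤ δ ∧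
        fDiv f (mix θ₁ pb0 pb1) (mix θ₂ pb0 pb1)
          = a * ((1 - θ₂) / (1 - w) + θ₂ / w)
              * f (((1 - θ₁) * w + θ₁ * (1 - w)) / ((1 - θ₂) * w + θ₂ * (1 - w)))
            + (1 - a / (1 - w)) * (1 - θ₂) * f ((1 - θ₁) / (1 - θ₂))
            + (1 - a / w) * θ₂ * f (θ₁ / θ₂)) := by
  obtain ⟨hδ0, hδ1⟩ := hδ
  have ha0 : 0 < a := by linarith
  have hw0 : 0 < w := by linarith
  have hw1 : 0 < 1 - w := by linarith
  have hK := divTerm_center f θ₁ θ₂ hw0 hw1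
  have hB : divTerm f θ₁ θ₂ 1 0 = (1 - θ₂) * f ((1 - θ₁) / (1 - θ₂)) := by simp [divTerm]
  have hC : divTerm f θ₁ θ₂ 0 1 = θ₂ * f (θ₁ / θ₂) := by simp [divTerm]
  rw [mul_assoc a, mul_assoc (1 - a / (1 - w)), mul_assoc (1 - a / w), ← hK, ← hB, ← hC]
  have hdiv : ∀ p0 p1 : Y → ℝ, fDiv f (mix θ₁ p0 p1) (mix θ₂ p0 p1)
      = ∑ y, divTerm f θ₁ θ₂ (p0 y) (p1 y) := fun _ _ => rfl
  constructor
  · intro p0 p1 ⟨h0, s0⟩ ⟨h1, s1⟩ hl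
    rw [hdiv]
    set K := divTerm f θ₁ θ₂ (1 / (1 - w)) (1 / w)
    set B := divTerm f θ₁ θ₂ 1 0
    set C := divTerm f θ₁ θ₂ 0 1
    let m : Y → ℝ := fun y => min ((1 - w) * p0 y) (w * p1 y)
    have hpt : ∀ y, divTerm f θ₁ θ₂ (p0 y) (p1 y)
        ≤ m y * K + (p0 y - m y / (1 - w)) * B + (p1 y - m y / w) * C := by
      intro y
      have hm0 : 0 ≤ m y := le_min (mul_nonneg hw1.le (h0 y)) (mul_nonneg hw0.le (h1 y))
      have hmb : 0 ≤ p0 y - m y / (1 - w) := by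
        rw [sub_nonneg, div_le_iff₀ hw1, mul_comm]
        exact min_le_left _ _
      have hmc : 0 ≤ p1 y - m y / w := by
        rw [sub_nonneg, div_le_iff₀ hw0, mul_comm]
        exact min_le_right _ _
      simpa only [add_sub_cancel] using divTerm_three_le hf hθ₁ hθ₂ hw0 hw1 hm0 hmb hmc
    have hM : a ≤ ∑ y, m y := by
      -- `2 min(x, z) = x + z - |x - z|`, and the total mass of `(1-w)p₀ + wp₁` is `1`
      have h2 : ∀ y, |(1 - w) * p0 y - w * p1 y|
          = (1 - w) * p0 y + w * p1 y - 2 * m y := by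
        intro y
        rcases le_total ((1 - w) * p0 y) (w * p1 y) with h | h
        · simp only [m, min_eq_left h, abs_of_nonpos (sub_nonpos.2 h)]
          ring
        · simp only [m, min_eq_right h, abs_of_nonneg (sub_nonneg.2 h)]
          ring
      have h3 : l1W w p0 p1 = 1 - 2 * ∑ y, m y := by
        unfold l1W
        simp only [h2, Finset.sum_sub_distrib, Finset.sum_add_distrib, ← Finset.mul_sum, s0, s1]
        ring
      linarith
    have hmono : K ≤ 1 / (1 - w) * B + 1 / w * C := by
      have := divTerm_three_le hf hθ₁ hθ₂ hw0 hw1 le_rfl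
        (show 0 ≤ 1 / (1 - w) by positivity) (show 0 ≤ 1 / w by positivity)
      simpa only [zero_div, zero_add, zero_mul] using this
    calc ∑ y, divTerm f θ₁ θ₂ (p0 y) (p1 y)
        ≤ ∑ y, (m y * K + (p0 y - m y / (1 - w)) * B + (p1 y - m y / w) * C) :=
          Finset.sum_le_sum fun y _ => hpt y
      _ = (∑ y, m y) * K + (1 - (∑ y, m y) / (1 - w)) * B + (1 - (∑ y, m y) / w) * C := by
          simp only [Finset.sum_add_distrib, ← Finset.sum_mul, Finset.sum_sub_distrib,
            ← Finset.sum_div, s0, s1]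
      _ ≤ a * K + (1 - a / (1 - w)) * B + (1 - a / w) * C := by
          have := mul_nonneg (sub_nonneg.2 hM) (sub_nonneg.2 hmono)
          simp only [div_eq_mul_inv, one_mul] at this ⊢
          linarith
  · intro y₁ y₂ y₃ h12 h13 h23 pb0 pb1 hp0 hp1
    have hb : 0 ≤ 1 - a / (1 - w) := by
      rw [sub_nonneg, div_le_one hw1]
      linarith
    have hc : 0 ≤ 1 - a / w := by
      rw [sub_nonneg, div_le_one hw0]
      exact hw
    -- Any quantity vanishing at masses `(0, 0)` is summed over three points only.
    have hsum : ∀ F : ℝ → ℝ → ℝ, F 0 0 = 0 → ∑ y, F (pb0 y) (pb1 y)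
        = F (a / (1 - w)) (a / w) + F (1 - a / (1 - w)) 0 + F 0 (1 - a / w) := by
      intro F hF
      have : ∀ y, F (pb0 y) (pb1 y) = (if y = y₁ then F (a / (1 - w)) (a / w) else 0)
          + (if y = y₂ then F (1 - a / (1 - w)) 0 else 0)
          + (if y = y₃ then F 0 (1 - a / w) else 0) := by
        intro y
        subst hp0 hp1
        by_cases e1 : y = y₁
        · subst e1
          simp [h12, h13]
        by_cases e2 : y = y₂
        · subst e2
          simp [h12.symm, h23]
        by_cases e3 : y = y₃
        · subst e3
          simp [h13.symm, h23.symm]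
        simp [e1, e2, e3, hF]
      simp only [this, Finset.sum_add_distrib, Finset.sum_ite_eq', Finset.mem_univ, if_true]
    refine ⟨⟨fun y => ?_, ?_⟩, ⟨fun y => ?_, ?_⟩, ?_, ?_⟩
    · subst hp0
      dsimp only
      split_ifs <;> positivity
    · rw [hsum (fun u _ => u) rfl]
      ring
    · subst hp1
      dsimp only
      split_ifs <;> positivity
    · rw [hsum (fun _ v => v) rfl]
      ring
    · unfold l1W
      rw [hsum (fun u v => |(1 - w) * u - w * v|) (by simp)]
      have e1 : (1 - w) * (a / (1 - w)) = a := by field_simp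
      have e2 : w * (a / w) = a := by field_simp
      simp only [mul_zero, sub_zero, zero_sub, abs_neg, abs_of_nonneg (mul_nonneg hw1.le hb),
        abs_of_nonneg (mul_nonneg hw0.le hc), e1, e2, sub_self, abs_zero]
      linarith
    · rw [hdiv, hsum (divTerm f θ₁ θ₂) (by simp [divTerm])]
      have e1 := divTerm_smul f θ₁ θ₂ a (1 / (1 - w)) (1 / w)
      have e2 := divTerm_smul f θ₁ θ₂ (1 - a / (1 - w)) 1 0
      have e3 := divTerm_smul f θ₁ θ₂ (1 - a / w) 0 1
      simp only [mul_one_div, mul_one, mul_zero] at e1 e2 e3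
      rw [e1, e2, e3]
end

section
/- Let δ, θ₁, θ₂ ∈ (0,1), a := (1-δ)/2, let w be a real number with a ≤ w ≤ 1-a, and let s ∈ (-1,0) ∪ (0,∞). Then over all pairs of distributions p₀, p₁ on a finite set Y with at least three elements satisfying ‖(1-w)p₀ - w p₁‖₁ ≤ δ, the maximum of the relative Rényi entropy D_{1+s}(p_{θ₁}‖p_{θ₂}) equals (1/s)·ln[ (a/(w(1-w)))·((1-θ₁)w + θ₁(1-w))^{1+s} / ((1-θ₂)w + θ₂(1-w))^{s} + (1 - a/(1-w))·(1-θ₁)^{1+s}/(1-θ₂)^{s} + (1 - a/w)·θ₁^{1+s}/θ₂^{s} ], and it is attained by the pair p̄₀ := (a/(1-w), 1 - a/(1-w), 0), p̄₁ := (a/w, 0, 1 - a/w) supported on three elements of Y. -/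
/-!
The sum inside the logarithm is `∑ y, G (p₀ y) (p₁ y)` with
`G x z = ((1-θ₁)x + θ₁z)^(1+s) * ((1-θ₂)x + θ₂z)^(-s)`. As a perspective of the power function
`t ↦ t^(1+s)` composed with a linear map, `G` is homogeneous of degree one, and it is subadditive on
the nonnegative quadrant for `s > 0`, superadditive for `-1 < s < 0` (`powKernel_add_le`,
`le_powKernel_add`).

For any homogeneous subadditive `G` (`sum_le_of_sublinear`): with `m y = min ((1-w)p₀ y) (w p₁ y)`,
the vector `((1-w)p₀ y, w p₁ y)` is `m y` times `(1,1)` plus nonnegative multiples of `(1,0)` and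
`(0,1)`. Subadditivity and summation bound `∑ G` by an affine function of `M = ∑ m`, which is
nonincreasing, again by subadditivity. Since `|u - v| = u + v - 2 min u v`, the norm constraint says
precisely `M ≥ a`, so the bound at `M = a` holds; its value is the one taken by the
three-point pair. The case `s < 0` follows by applying this to `-G`, because `1/s < 0` reverses the
inequality.
-/

open Finset Real

/-- The relative Rényi entropy `D_{1+s}(q‖q')`, with a term of the sum taken to be `0`
whenever `q y = q' y = 0`. -/
noncomputable def renyi {Y : Type*} [Fintype Y] (s : ℝ) (q q' : Y → ℝ) : ℝ :=
  (1 / s) * Real.log (∑ y, if q y = 0 ∧ q' y = 0 then 0 else q y ^ (1 + s) * q' y ^ (-s))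

/-! ### Homogeneity and sub/superadditivity of the Rényi summand -/

/-- The summand `A^(1+s) C^(-s)` of the Rényi entropy. -/
noncomputable def powKernel (s A C : ℝ) : ℝ := A ^ (1 + s) * C ^ (-s)

/-- The summand of `D_{1+s}(p_θ₁‖p_θ₂)` as a function of the values `x`, `z` of `p₀`, `p₁`. -/
noncomputable def mixKernel (s θ₁ θ₂ x z : ℝ) : ℝ :=
  powKernel s ((1 - θ₁) * x + θ₁ * z) ((1 - θ₂) * x + θ₂ * z)

lemma powKernel_smul {s t A C : ℝ} (hs : -1 < s) (ht : 0 ≤ t) (hA : 0 ≤ A) (hC : 0 ≤ C) :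
    powKernel s (t * A) (t * C) = t * powKernel s A C := by
  unfold powKernel
  rcases ht.eq_or_lt with rfl | ht
  · simp [Real.zero_rpow (show 1 + s ≠ 0 by linarith)]
  · rw [Real.mul_rpow ht.le hA, Real.mul_rpow ht.le hC]
    have h : t ^ (1 + s) * t ^ (-s) = t := by
      rw [← Real.rpow_add ht]; simp
    linear_combination (A ^ (1 + s) * C ^ (-s)) * h

/-- `powKernel` is the perspective of `t ↦ t ^ (1 + s)`. -/
lemma powKernel_eq {s A C : ℝ} (hA : 0 ≤ A) (hC : 0 < C) :
    powKernel s A C = C * (A / C) ^ (1 + s) := by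
  unfold powKernel
  rw [Real.div_rpow hA hC.le, Real.rpow_add hC, Real.rpow_neg hC.le, Real.rpow_one]
  have := Real.rpow_pos_of_pos hC s
  field_simp

lemma powKernel_add_le {s A B C D : ℝ} (hs : 0 < s) (hA : 0 ≤ A) (hB : 0 ≤ B)
    (hC : 0 < C) (hD : 0 < D) :
    powKernel s (A + B) (C + D) ≤ powKernel s A C + powKernel s B D := by
  rw [powKernel_eq (by positivity) (by positivity), powKernel_eq hA hC, powKernel_eq hB hD]
  have h := (convexOn_rpow (show 1 ≤ 1 + s by linarith)).2
    (show A / C ∈ Set.Ici 0 from div_nonneg hA hC.le)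
    (show B / D ∈ Set.Ici 0 from div_nonneg hB hD.le)
    (show 0 ≤ C / (C + D) by positivity) (show 0 ≤ D / (C + D) by positivity) (by field_simp)
  simp only [smul_eq_mul] at h
  have e : C / (C + D) * (A / C) + D / (C + D) * (B / D) = (A + B) / (C + D) := by field_simp
  rw [e] at h
  have h2 := mul_le_mul_of_nonneg_left h (show 0 ≤ C + D by positivity)
  refine h2.trans_eq ?_
  field_simp

lemma le_powKernel_add {s A B C D : ℝ} (hs : -1 < s) (hs' : s < 0) (hA : 0 ≤ A) (hB : 0 ≤ B)
    (hC : 0 < C) (hD : 0 < D) :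
    powKernel s A C + powKernel s B D ≤ powKernel s (A + B) (C + D) := by
  rw [powKernel_eq hA hC, powKernel_eq hB hD, powKernel_eq (by positivity) (by positivity)]
  have h := (Real.concaveOn_rpow (show 0 ≤ 1 + s by linarith) (show 1 + s ≤ 1 by linarith)).2
    (show A / C ∈ Set.Ici 0 from div_nonneg hA hC.le)
    (show B / D ∈ Set.Ici 0 from div_nonneg hB hD.le)
    (show 0 ≤ C / (C + D) by positivity) (show 0 ≤ D / (C + D) by positivity) (by field_simp)
  simp only [smul_eq_mul] at h
  have e : C / (C + D) * (A / C) + D / (C + D) * (B / D) = (A + B) / (C + D) := by field_simp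
  rw [e] at h
  have h2 := mul_le_mul_of_nonneg_left h (show 0 ≤ C + D by positivity)
  refine Eq.trans_le ?_ h2
  field_simp

lemma combo_pos {θ x z : ℝ} (hθ : θ ∈ Set.Ioo (0 : ℝ) 1) (hx : 0 ≤ x) (hz : 0 ≤ z)
    (h : ¬(x = 0 ∧ z = 0)) : 0 < (1 - θ) * x + θ * z := by
  obtain ⟨h0, h1⟩ := hθ
  have h1' : 0 < 1 - θ := by linarith
  rcases hx.eq_or_lt with rfl | hx
  · have : 0 < z := lt_of_le_of_ne hz (fun e => h ⟨rfl, e.symm⟩)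
    positivity
  · positivity

lemma combo_nonneg {θ x z : ℝ} (hθ : θ ∈ Set.Ioo (0 : ℝ) 1) (hx : 0 ≤ x) (hz : 0 ≤ z) :
    0 ≤ (1 - θ) * x + θ * z :=
  add_nonneg (mul_nonneg (sub_nonneg.2 hθ.2.le) hx) (mul_nonneg hθ.1.le hz)

lemma mixKernel_zero {s θ₁ θ₂ : ℝ} (hs : -1 < s) : mixKernel s θ₁ θ₂ 0 0 = 0 := by
  simp [mixKernel, powKernel, Real.zero_rpow (show 1 + s ≠ 0 by linarith)]

lemma mixKernel_pos {s θ₁ θ₂ x z : ℝ} (hθ₁ : θ₁ ∈ Set.Ioo (0 : ℝ) 1)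
    (hθ₂ : θ₂ ∈ Set.Ioo (0 : ℝ) 1) (hx : 0 ≤ x) (hz : 0 ≤ z) (h : ¬(x = 0 ∧ z = 0)) :
    0 < mixKernel s θ₁ θ₂ x z :=
  mul_pos (Real.rpow_pos_of_pos (combo_pos hθ₁ hx hz h) _)
    (Real.rpow_pos_of_pos (combo_pos hθ₂ hx hz h) _)

lemma mixKernel_nonneg {s θ₁ θ₂ x z : ℝ} (hθ₁ : θ₁ ∈ Set.Ioo (0 : ℝ) 1)
    (hθ₂ : θ₂ ∈ Set.Ioo (0 : ℝ) 1) (hx : 0 ≤ x) (hz : 0 ≤ z) :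
    0 ≤ mixKernel s θ₁ θ₂ x z :=
  mul_nonneg (Real.rpow_nonneg (combo_nonneg hθ₁ hx hz) _)
    (Real.rpow_nonneg (combo_nonneg hθ₂ hx hz) _)

lemma mixKernel_smul {s θ₁ θ₂ t x z : ℝ} (hs : -1 < s) (hθ₁ : θ₁ ∈ Set.Ioo (0 : ℝ) 1)
    (hθ₂ : θ₂ ∈ Set.Ioo (0 : ℝ) 1) (ht : 0 ≤ t) (hx : 0 ≤ x) (hz : 0 ≤ z) :
    mixKernel s θ₁ θ₂ (t * x) (t * z) = t * mixKernel s θ₁ θ₂ x z := by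
  unfold mixKernel
  rw [← powKernel_smul hs ht (combo_nonneg hθ₁ hx hz) (combo_nonneg hθ₂ hx hz)]
  congr 1 <;> ring

lemma mixKernel_add_le {s θ₁ θ₂ x z x' z' : ℝ} (hs : 0 < s) (hθ₁ : θ₁ ∈ Set.Ioo (0 : ℝ) 1)
    (hθ₂ : θ₂ ∈ Set.Ioo (0 : ℝ) 1) (hx : 0 ≤ x) (hz : 0 ≤ z) (hx' : 0 ≤ x') (hz' : 0 ≤ z') :
    mixKernel s θ₁ θ₂ (x + x') (z + z') ≤ mixKernel s θ₁ θ₂ x z + mixKernel s θ₁ θ₂ x' z' := by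
  by_cases h : x = 0 ∧ z = 0
  · simp [h.1, h.2, mixKernel_zero (show -1 < s by linarith)]
  by_cases h' : x' = 0 ∧ z' = 0
  · simp [h'.1, h'.2, mixKernel_zero (show -1 < s by linarith)]
  refine Eq.trans_le ?_ (powKernel_add_le hs (combo_nonneg hθ₁ hx hz) (combo_nonneg hθ₁ hx' hz')
    (combo_pos hθ₂ hx hz h) (combo_pos hθ₂ hx' hz' h'))
  unfold mixKernel
  congr 1 <;> ring

lemma le_mixKernel_add {s θ₁ θ₂ x z x' z' : ℝ} (hs : -1 < s) (hs' : s < 0)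
    (hθ₁ : θ₁ ∈ Set.Ioo (0 : ℝ) 1)
    (hθ₂ : θ₂ ∈ Set.Ioo (0 : ℝ) 1) (hx : 0 ≤ x) (hz : 0 ≤ z) (hx' : 0 ≤ x') (hz' : 0 ≤ z') :
    mixKernel s θ₁ θ₂ x z + mixKernel s θ₁ θ₂ x' z' ≤ mixKernel s θ₁ θ₂ (x + x') (z + z') := by
  by_cases h : x = 0 ∧ z = 0
  · simp [h.1, h.2, mixKernel_zero hs]
  by_cases h' : x' = 0 ∧ z' = 0
  · simp [h'.1, h'.2, mixKernel_zero hs]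
  refine (le_powKernel_add hs hs' (combo_nonneg hθ₁ hx hz) (combo_nonneg hθ₁ hx' hz')
    (combo_pos hθ₂ hx hz h) (combo_pos hθ₂ hx' hz' h')).trans_eq ?_
  unfold mixKernel
  congr 1 <;> ring

/-- The `ite` in `renyi` is redundant for `-1 < s`, since `0 ^ (1 + s) = 0`. -/
lemma renyi_mix {Y : Type} [Fintype Y] {s : ℝ} (hs : -1 < s) (θ₁ θ₂ : ℝ) (p0 p1 : Y → ℝ) :
    renyi s (mix θ₁ p0 p1) (mix θ₂ p0 p1)
      = (1 / s) * Real.log (∑ y, mixKernel s θ₁ θ₂ (p0 y) (p1 y)) := by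
  unfold renyi
  congr 2
  refine Finset.sum_congr rfl fun y _ => ?_
  split_ifs with h
  · have h1 : (1 - θ₁) * p0 y + θ₁ * p1 y = 0 := h.1
    simp [mixKernel, powKernel, h1, Real.zero_rpow (show 1 + s ≠ 0 by linarith)]
  · rfl

/-! ### The extremal bound for sublinear functions -/

/-- The extremal bound for an arbitrary function `G` that is positively homogeneous and
subadditive on the nonnegative quadrant. -/
lemma sum_le_of_sublinear {Y : Type} [Fintype Y] (G : ℝ → ℝ → ℝ)
    (hom : ∀ t x z, 0 ≤ t → 0 ≤ x → 0 ≤ z → G (t * x) (t * z) = t * G x z)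
    (sub : ∀ x z x' z', 0 ≤ x → 0 ≤ z → 0 ≤ x' → 0 ≤ z' →
      G (x + x') (z + z') ≤ G x z + G x' z')
    {w δ : ℝ} (hw : 0 < w) (hw' : w < 1) {p0 p1 : Y → ℝ} (h0 : IsDist p0) (h1 : IsDist p1)
    (hl : l1W w p0 p1 ≤ δ) :
    ∑ y, G (p0 y) (p1 y) ≤ ((1 - δ) / 2) / (w * (1 - w)) * G w (1 - w)
      + (1 - ((1 - δ) / 2) / (1 - w)) * G 1 0 + (1 - ((1 - δ) / 2) / w) * G 0 1 := by
  have hv : 0 < 1 - w := by linarith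
  obtain ⟨h0n, h0s⟩ := h0
  obtain ⟨h1n, h1s⟩ := h1
  set m : Y → ℝ := fun y => min ((1 - w) * p0 y) (w * p1 y) with hm
  have hm0 : ∀ y, 0 ≤ m y := fun y =>
    le_min (mul_nonneg hv.le (h0n y)) (mul_nonneg hw.le (h1n y))
  have hmu : ∀ y, m y ≤ (1 - w) * p0 y := fun y => min_le_left _ _
  have hmv : ∀ y, m y ≤ w * p1 y := fun y => min_le_right _ _
  have hpt : ∀ y, G (p0 y) (p1 y) ≤ m y / (w * (1 - w)) * G w (1 - w)
      + (p0 y - m y / (1 - w)) * G 1 0 + (p1 y - m y / w) * G 0 1 := by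
    intro y
    have hA : 0 ≤ p0 y - m y / (1 - w) := by
      rw [sub_nonneg, div_le_iff₀ hv]; linarith [hmu y]
    have hB : 0 ≤ p1 y - m y / w := by
      rw [sub_nonneg, div_le_iff₀ hw]; linarith [hmv y]
    have ht : 0 ≤ m y / (w * (1 - w)) := div_nonneg (hm0 y) (by positivity)
    rw [← hom _ _ _ ht hw.le hv.le, ← hom _ _ _ hA zero_le_one le_rfl,
      ← hom _ _ _ hB le_rfl zero_le_one]
    have s1 := sub (m y / (w * (1 - w)) * w) (m y / (w * (1 - w)) * (1 - w))
      (p0 y - m y / (1 - w)) 0 (by positivity) (by positivity) hA le_rfl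
    have s2 := sub (m y / (w * (1 - w)) * w + (p0 y - m y / (1 - w)))
      (m y / (w * (1 - w)) * (1 - w) + 0) 0 (p1 y - m y / w) (by positivity) (by positivity)
      le_rfl hB
    have e1 : m y / (w * (1 - w)) * w + (p0 y - m y / (1 - w)) + 0 = p0 y := by field_simp; ring
    have e2 : m y / (w * (1 - w)) * (1 - w) + 0 + (p1 y - m y / w) = p1 y := by field_simp; ring
    rw [e1, e2] at s2
    simp only [mul_one, mul_zero]
    linarith
  have hsum := Finset.sum_le_sum fun y (_ : y ∈ Finset.univ) => hpt y
  rw [Finset.sum_add_distrib, Finset.sum_add_distrib, ← Finset.sum_mul, ← Finset.sum_mul,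
    ← Finset.sum_mul, Finset.sum_sub_distrib, Finset.sum_sub_distrib, ← Finset.sum_div,
    ← Finset.sum_div, ← Finset.sum_div, h0s, h1s] at hsum
  have hM : (1 - δ) / 2 ≤ ∑ y, m y := by
    have e : l1W w p0 p1 = 1 - 2 * ∑ y, m y := by
      have : ∀ y, |(1 - w) * p0 y - w * p1 y| = (1 - w) * p0 y + w * p1 y - 2 * m y := by
        intro y
        have := max_sub_min_eq_abs ((1 - w) * p0 y) (w * p1 y)
        have h2 := max_add_min ((1 - w) * p0 y) (w * p1 y)
        rw [abs_sub_comm] at this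
        simp only [hm]
        linarith
      unfold l1W
      simp_rw [this]
      rw [Finset.sum_sub_distrib, Finset.sum_add_distrib, ← Finset.mul_sum, ← Finset.mul_sum,
        ← Finset.mul_sum, h0s, h1s]
      ring
    linarith
  -- The bound is affine in `M = ∑ m` with slope `(G w (1-w) - w G 1 0 - (1-w) G 0 1) / (w(1-w)) ≤ 0`.
  have slope : G w (1 - w) ≤ w * G 1 0 + (1 - w) * G 0 1 := by
    have := sub (w * 1) (w * 0) ((1 - w) * 0) ((1 - w) * 1) (by positivity) (by positivity)
      (by positivity) (by positivity)
    rw [hom _ _ _ hw.le zero_le_one le_rfl, hom _ _ _ hv.le le_rfl zero_le_one] at this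
    simpa using this
  refine hsum.trans (sub_nonneg.1 ?_)
  have key : 0 ≤ (∑ y, m y - (1 - δ) / 2) / (w * (1 - w))
      * (w * G 1 0 + (1 - w) * G 0 1 - G w (1 - w)) :=
    mul_nonneg (div_nonneg (by linarith) (by positivity)) (by linarith)
  refine key.trans_eq ?_
  field_simp
  ring

/-! ### The three-point pair and the maximum -/

lemma sum_three {Y : Type} [Fintype Y] [DecidableEq Y] {y₁ y₂ y₃ : Y} (h12 : y₁ ≠ y₂)
    (h13 : y₁ ≠ y₃) (h23 : y₂ ≠ y₃) (g : Y → ℝ)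
    (hg : ∀ y, y ≠ y₁ → y ≠ y₂ → y ≠ y₃ → g y = 0) : ∑ y, g y = g y₁ + g y₂ + g y₃ := by
  rw [← Finset.sum_subset (Finset.subset_univ {y₁, y₂, y₃})]
  · rw [Finset.sum_insert (by simp [h12, h13]), Finset.sum_insert (by simp [h23]),
      Finset.sum_singleton, add_assoc]
  · intro y _ hy
    simp only [Finset.mem_insert, Finset.mem_singleton, not_or] at hy
    exact hg y hy.1 hy.2.1 hy.2.2

theorem stmt9 (δ θ₁ θ₂ a w s : ℝ) (hδ : δ ∈ Set.Ioo (0 : ℝ) 1)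
    (hθ₁ : θ₁ ∈ Set.Ioo (0 : ℝ) 1) (hθ₂ : θ₂ ∈ Set.Ioo (0 : ℝ) 1)
    (ha : a = (1 - δ) / 2) (hw : a ≤ w) (hw' : w ≤ 1 - a)
    (hs : s ∈ Set.Ioo (-1 : ℝ) 0 ∪ Set.Ioi (0 : ℝ))
    (Y : Type) [Fintype Y] [DecidableEq Y] (hY : 3 ≤ Fintype.card Y) :
    (∀ p0 p1 : Y → ℝ, IsDist p0 → IsDist p1 → l1W w p0 p1 ≤ δ →
        renyi s (mix θ₁ p0 p1) (mix θ₂ p0 p1)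
          ≤ (1 / s) * Real.log
              (a / (w * (1 - w)) * (((1 - θ₁) * w + θ₁ * (1 - w)) ^ (1 + s)
                  / (((1 - θ₂) * w + θ₂ * (1 - w)) ^ s))
                + (1 - a / (1 - w)) * ((1 - θ₁) ^ (1 + s) / (1 - θ₂) ^ s)
                + (1 - a / w) * (θ₁ ^ (1 + s) / θ₂ ^ s))) ∧
    (∀ y₁ y₂ y₃ : Y, y₁ ≠ y₂ → y₁ ≠ y₃ → y₂ ≠ y₃ →
      ∀ pb0 pb1 : Y → ℝ,
        pb0 = (fun y => if y = y₁ then a / (1 - w) else if y = y₂ then 1 - a / (1 - w) else 0) →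
        pb1 = (fun y => if y = y₁ then a / w else if y = y₃ then 1 - a / w else 0) →
        IsDist pb0 ∧ IsDist pb1 ∧ l1W w pb0 pb1 ≤ δ ∧
        renyi s (mix θ₁ pb0 pb1) (mix θ₂ pb0 pb1)
          = (1 / s) * Real.log
              (a / (w * (1 - w)) * (((1 - θ₁) * w + θ₁ * (1 - w)) ^ (1 + s)
                  / (((1 - θ₂) * w + θ₂ * (1 - w)) ^ s))
                + (1 - a / (1 - w)) * ((1 - θ₁) ^ (1 + s) / (1 - θ₂) ^ s)
                + (1 - a / w) * (θ₁ ^ (1 + s) / θ₂ ^ s))) := by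
  have hs1 : -1 < s := by
    rcases hs with h | h
    · exact h.1
    · exact lt_trans (by norm_num) h
  have ha0 : 0 < a := by rw [ha]; linarith [hδ.2]
  have hw0 : 0 < w := by linarith
  have hv0 : 0 < 1 - w := by linarith
  have haw : 0 ≤ 1 - a / w := by rw [sub_nonneg, div_le_one hw0]; exact hw
  have hav : 0 ≤ 1 - a / (1 - w) := by rw [sub_nonneg, div_le_one hv0]; linarith
  have hT : a / (w * (1 - w)) * (((1 - θ₁) * w + θ₁ * (1 - w)) ^ (1 + s)
                  / (((1 - θ₂) * w + θ₂ * (1 - w)) ^ s))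
                + (1 - a / (1 - w)) * ((1 - θ₁) ^ (1 + s) / (1 - θ₂) ^ s)
                + (1 - a / w) * (θ₁ ^ (1 + s) / θ₂ ^ s)
      = a / (w * (1 - w)) * mixKernel s θ₁ θ₂ w (1 - w)
        + (1 - a / (1 - w)) * mixKernel s θ₁ θ₂ 1 0 + (1 - a / w) * mixKernel s θ₁ θ₂ 0 1 := by
    simp only [mixKernel, powKernel, mul_one, mul_zero, add_zero, zero_add, div_eq_mul_inv]
    rw [Real.rpow_neg (combo_nonneg hθ₂ hw0.le hv0.le), Real.rpow_neg hθ₂.1.le,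
      Real.rpow_neg (sub_nonneg.2 hθ₂.2.le)]
  rw [hT]
  refine ⟨?_, ?_⟩
  · intro p0 p1 h0 h1 hl
    rw [renyi_mix hs1]
    rcases hs with h | h
    · have hb := sum_le_of_sublinear (fun x z => -mixKernel s θ₁ θ₂ x z)
        (fun t x z ht hx hz => by simp only [mixKernel_smul hs1 hθ₁ hθ₂ ht hx hz]; ring)
        (fun x z x' z' hx hz hx' hz' => by
          linarith [le_mixKernel_add hs1 h.2 hθ₁ hθ₂ hx hz hx' hz'])
        hw0 (by linarith) h0 h1 hl
      rw [← ha, Finset.sum_neg_distrib] at hb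
      refine mul_le_mul_of_nonpos_left (Real.log_le_log ?_ (by linarith))
        (one_div_nonpos.2 h.2.le)
      have k1 := mixKernel_pos (s := s) hθ₁ hθ₂ hw0.le hv0.le (fun e => hw0.ne' e.1)
      have k2 := mixKernel_nonneg (s := s) hθ₁ hθ₂ zero_le_one (le_refl (0 : ℝ))
      have k3 := mixKernel_nonneg (s := s) hθ₁ hθ₂ (le_refl (0 : ℝ)) zero_le_one
      positivity
    · have h' : 0 < s := h
      have hb := sum_le_of_sublinear (mixKernel s θ₁ θ₂)
        (fun t x z ht hx hz => mixKernel_smul hs1 hθ₁ hθ₂ ht hx hz)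
        (fun x z x' z' hx hz hx' hz' => mixKernel_add_le h' hθ₁ hθ₂ hx hz hx' hz')
        hw0 (by linarith) h0 h1 hl
      rw [← ha] at hb
      refine mul_le_mul_of_nonneg_left (Real.log_le_log ?_ hb) (one_div_nonneg.2 h'.le)
      obtain ⟨y, hy⟩ : ∃ y, p0 y ≠ 0 := by
        by_contra! hc
        have := h0.2
        simp [hc] at this
      exact Finset.sum_pos' (fun y _ => mixKernel_nonneg hθ₁ hθ₂ (h0.1 y) (h1.1 y))
        ⟨y, Finset.mem_univ y, mixKernel_pos hθ₁ hθ₂ (h0.1 y) (h1.1 y) (fun e => hy e.1)⟩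
  · intro y₁ y₂ y₃ h12 h13 h23 pb0 pb1 e0 e1
    have a1 : pb0 y₁ = a / (1 - w) := by simp [e0]
    have a2 : pb0 y₂ = 1 - a / (1 - w) := by simp [e0, h12.symm]
    have a3 : pb0 y₃ = 0 := by simp [e0, h13.symm, h23.symm]
    have b1 : pb1 y₁ = a / w := by simp [e1]
    have b2 : pb1 y₂ = 0 := by simp [e1, h12.symm, h23]
    have b3 : pb1 y₃ = 1 - a / w := by simp [e1, h13.symm]
    have a0 : ∀ y, y ≠ y₁ → y ≠ y₂ → y ≠ y₃ → pb0 y = 0 := fun y n1 n2 n3 => by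
      simp [e0, n1, n2]
    have b0 : ∀ y, y ≠ y₁ → y ≠ y₂ → y ≠ y₃ → pb1 y = 0 := fun y n1 n2 n3 => by
      simp [e1, n1, n3]
    refine ⟨⟨fun y => ?_, ?_⟩, ⟨fun y => ?_, ?_⟩, ?_, ?_⟩
    · simp only [e0]
      split_ifs <;> first | exact hav | positivity
    · rw [sum_three h12 h13 h23 _ a0, a1, a2, a3]; ring
    · simp only [e1]
      split_ifs <;> first | exact haw | positivity
    · rw [sum_three h12 h13 h23 _ b0, b1, b2, b3]; ring
    · unfold l1W
      rw [sum_three h12 h13 h23 _ (fun y n1 n2 n3 => by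
        simp [a0 y n1 n2 n3, b0 y n1 n2 n3]), a1, a2, a3, b1, b2, b3]
      have c1 : (1 - w) * (a / (1 - w)) - w * (a / w) = 0 := by field_simp; ring
      have c2 : (1 - w) * (1 - a / (1 - w)) - w * 0 = 1 - w - a := by field_simp; ring
      have c3 : (1 - w) * 0 - w * (1 - a / w) = -(w - a) := by field_simp; ring
      rw [c1, c2, c3, abs_zero, abs_neg, abs_of_nonneg (by linarith : 0 ≤ 1 - w - a),
        abs_of_nonneg (by linarith : 0 ≤ w - a), ha]
      linarith
    · rw [renyi_mix hs1, sum_three h12 h13 h23 _ (fun y n1 n2 n3 => by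
        rw [a0 y n1 n2 n3, b0 y n1 n2 n3, mixKernel_zero hs1]), a1, a2, a3, b1, b2, b3,
        ← mixKernel_smul hs1 hθ₁ hθ₂ (by positivity) hw0.le hv0.le,
        ← mixKernel_smul hs1 hθ₁ hθ₂ hav zero_le_one le_rfl,
        ← mixKernel_smul hs1 hθ₁ hθ₂ haw le_rfl zero_le_one]
      have d1 : a / (w * (1 - w)) * w = a / (1 - w) := by field_simp
      have d2 : a / (w * (1 - w)) * (1 - w) = a / w := by field_simp
      rw [d1, d2]
      simp only [mul_one, mul_zero]
end

section
/- Let Y be a finite set, let p₀, p₁ be distributions on Y, let w ∈ (0,1), δ ∈ (0,1), and a := (1-δ)/2. Suppose there is an element y₀ ∈ Y such that p₀(y)·p₁(y) = 0 for every y ≠ y₀, and suppose ‖(1-w)p₀ - w p₁‖₁ ≤ δ. Then (1-w)·p₀(y₀) ≥ a and w·p₁(y₀) ≥ a. -/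
/-!
Write `u = (1 - w) p₀` and `v = w p₁`, nonnegative functions of total mass one together. Since
`min u v = (u + v - |u - v|) / 2` pointwise, summing gives `∑ min u v = (1 - ‖u - v‖₁) / 2 ≥ a`.
Off `y₀` one of `u`, `v` vanishes, so the left-hand sum is just `min (u y₀) (v y₀)`.
-/

open Finset

theorem stmt15 (Y : Type) [Fintype Y] (p0 p1 : Y → ℝ)
    (hp0 : IsDist p0) (hp1 : IsDist p1) (w δ a : ℝ)
    (hw : w ∈ Set.Ioo (0 : ℝ) 1) (hδ : δ ∈ Set.Ioo (0 : ℝ) 1) (ha : a = (1 - δ) / 2)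
    (y₀ : Y) (hsupp : ∀ y, y ≠ y₀ → p0 y * p1 y = 0)
    (hcon : l1W w p0 p1 ≤ δ) :
    a ≤ (1 - w) * p0 y₀ ∧ a ≤ w * p1 y₀ := by
  obtain ⟨h0, s0⟩ := hp0
  obtain ⟨h1, s1⟩ := hp1
  obtain ⟨hw0, hw1⟩ := hw
  have hpt : ∀ y, min ((1 - w) * p0 y) (w * p1 y) =
      ((1 - w) * p0 y + w * p1 y - |(1 - w) * p0 y - w * p1 y|) / 2 := fun y => by
    rcases le_total ((1 - w) * p0 y) (w * p1 y) with h | h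
    · rw [min_eq_left h, abs_of_nonpos (by linarith)]; ring
    · rw [min_eq_right h, abs_of_nonneg (by linarith)]; ring
  have hmin : ∀ y, y ≠ y₀ → min ((1 - w) * p0 y) (w * p1 y) = 0 := fun y hy => by
    rcases mul_eq_zero.mp (hsupp y hy) with h | h
    · rw [h, mul_zero]
      exact min_eq_left (mul_nonneg hw0.le (h1 y))
    · rw [h, mul_zero]
      exact min_eq_right (mul_nonneg (by linarith) (h0 y))
  have hsum : ∑ y, min ((1 - w) * p0 y) (w * p1 y) =
      min ((1 - w) * p0 y₀) (w * p1 y₀) :=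
    Fintype.sum_eq_single y₀ hmin
  have htot : ∑ y, min ((1 - w) * p0 y) (w * p1 y) = (1 - l1W w p0 p1) / 2 := by
    simp only [hpt, l1W]
    rw [← Finset.sum_div, Finset.sum_sub_distrib, Finset.sum_add_distrib,
      ← Finset.mul_sum, ← Finset.mul_sum, s0, s1]
    ring
  rw [← le_min_iff, ← hsum, htot, ha]
  linarith
end

section
/- Let Y be a finite set, let w ∈ (0,1) and δ ∈ (0,1), and consider the convex set D of pairs (p₀, p₁) of distributions on Y satisfying ‖(1-w)p₀ - w p₁‖₁ ≤ δ, regarded as a subset of the real vector space (Y → ℝ) × (Y → ℝ). If (p₀, p₁) is an extreme point of D, then there is at most one element y ∈ Y with p₀(y)·p₁(y) > 0. -/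
/-!
Suppose `p₀` and `p₁` are both positive at two distinct points `y`, `y'`. Let `e` be the
function that is `1` at `y`, `-1` at `y'` and `0` elsewhere. Moving the pair `(p₀, p₁)` along
the direction `(w e, (1 - w) e)` leaves the signed function `(1 - w) p₀ - w p₁` unchanged, hence
also its `ℓ¹` norm, and it preserves total mass. For small steps of either sign nonnegativity
persists, so `(p₀, p₁)` is the midpoint of a nondegenerate segment in `D` and is not extreme.
-/

open Finset

/-- Moving mass `t` from `y'` to `y` (or back, if `t < 0`) keeps a distribution a distribution
as long as both points carry mass at least `|t|`. -/
lemma IsDist.transfer {Y : Type*} [Fintype Y] [DecidableEq Y] {p : Y → ℝ} (hp : IsDist p)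
    {y y' : Y} (hne : y ≠ y') {t : ℝ} (hy : |t| ≤ p y) (hy' : |t| ≤ p y') :
    IsDist (p + t • (Pi.single y 1 - Pi.single y' 1)) := by
  refine ⟨fun z => ?_, ?_⟩
  · have hz := hp.1 z
    have h1 := abs_le.mp hy
    have h2 := abs_le.mp hy'
    by_cases h : z = y
    · subst h
      simp [hne]
      linarith
    · by_cases h' : z = y'
      · subst h'
        simp [h]
        linarith
      · simpa [h, h'] using hz
  · simp [Finset.sum_add_distrib, ← Finset.mul_sum, hp.2]

theorem stmt17 (Y : Type) [Fintype Y] (w δ : ℝ)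
    (hw : w ∈ Set.Ioo (0 : ℝ) 1) (hδ : δ ∈ Set.Ioo (0 : ℝ) 1)
    (D : Set ((Y → ℝ) × (Y → ℝ)))
    (hD : D = {pq | IsDist pq.1 ∧ IsDist pq.2 ∧ l1W w pq.1 pq.2 ≤ δ})
    (p0 p1 : Y → ℝ) (hext : (p0, p1) ∈ Set.extremePoints ℝ D) :
    ∀ y y' : Y, 0 < p0 y * p1 y → 0 < p0 y' * p1 y' → y = y' := by
  classical
  obtain ⟨hw0, hw1⟩ := hw
  subst hD
  intro y y' hy hy'
  by_contra hne
  obtain ⟨⟨hp0, hp1, hl⟩, hseg⟩ := hext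
  have pos : ∀ z, 0 < p0 z * p1 z → 0 < p0 z ∧ 0 < p1 z := fun z hz =>
    ⟨pos_of_mul_pos_left hz (hp1.1 z), pos_of_mul_pos_right hz (hp0.1 z)⟩
  obtain ⟨a, b⟩ := pos y hy
  obtain ⟨a', b'⟩ := pos y' hy'
  obtain ⟨ε, hε, h1, h2, h3, h4⟩ :
      ∃ ε : ℝ, 0 < ε ∧ ε ≤ p0 y ∧ ε ≤ p1 y ∧ ε ≤ p0 y' ∧ ε ≤ p1 y' :=
    ⟨min (min (p0 y) (p1 y)) (min (p0 y') (p1 y')), by positivity, by simp, by simp, by simp,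
      by simp⟩
  set e : Y → ℝ := Pi.single y 1 - Pi.single y' 1 with he
  have mem : ∀ t : ℝ, |t| ≤ ε →
      (p0 + (t * w) • e, p1 + (t * (1 - w)) • e) ∈
        {pq : (Y → ℝ) × (Y → ℝ) | IsDist pq.1 ∧ IsDist pq.2 ∧ l1W w pq.1 pq.2 ≤ δ} := by
    intro t ht
    have ha : |t * w| ≤ ε := by
      rw [abs_mul, abs_of_pos hw0]
      nlinarith [abs_nonneg t]
    have hb : |t * (1 - w)| ≤ ε := by
      rw [abs_mul, abs_of_pos (sub_pos.mpr hw1)]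
      nlinarith [abs_nonneg t]
    refine ⟨hp0.transfer hne (ha.trans h1) (ha.trans h3),
      hp1.transfer hne (hb.trans h2) (hb.trans h4), ?_⟩
    -- The perturbation cancels in `(1 - w) p₀ - w p₁`.
    have hinv : l1W w (p0 + (t * w) • e) (p1 + (t * (1 - w)) • e) = l1W w p0 p1 := by
      unfold l1W
      refine Finset.sum_congr rfl fun z _ => congrArg _ ?_
      simp only [Pi.add_apply, Pi.smul_apply, smul_eq_mul]
      ring
    exact hinv.trans_le hl
  have hmid : (p0, p1) ∈ openSegment ℝ (p0 + (ε * w) • e, p1 + (ε * (1 - w)) • e)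
      (p0 + (-ε * w) • e, p1 + (-ε * (1 - w)) • e) := by
    refine ⟨1 / 2, 1 / 2, by norm_num, by norm_num, by norm_num, ?_⟩
    ext z <;> simp <;> ring
  have heq := hseg (mem ε (abs_of_pos hε).le) (mem (-ε) (by rw [abs_neg, abs_of_pos hε])) hmid
  have hfst := congrFun (congrArg Prod.fst heq) y
  simp [he, hne, hε.ne', hw0.ne'] at hfst
end

section
/- Let δ, θ₁, θ₂ ∈ (0,1), a := (1-δ)/2, and let w be a real number with a ≤ w ≤ 1-a. Let p̄₀ := (a/(1-w), 1 - a/(1-w), 0) and p̄₁ := (a/w, 0, 1 - a/w) be distributions on a three-element set, and write p̄_θ := (1-θ)p̄₀ + θ p̄₁. Then for every finite set Y and every pair of distributions p₀, p₁ on Y with ‖(1-w)p₀ - w p₁‖₁ ≤ δ, the Chernoff exponent satisfies sup_{s∈(-1,0)} (-s)·D_{1+s}(p_{θ₁}‖p_{θ₂}) ≤ sup_{s∈(-1,0)} (-s)·D_{1+s}(p̄_{θ₁}‖p̄_{θ₂}). -/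
/-!
For `α = 1 + s ∈ (0, 1)` one has `(-s) D_{1+s}(p_{θ₁}‖p_{θ₂}) = -log ∑ y, F (p₀ y) (p₁ y)`, where
`F x y = ((1-θ₁)x + θ₁y)^α ((1-θ₂)x + θ₂y)^(1-α)` is positively homogeneous and, by Hölder's
inequality, superadditive (`chernF_superadd`). It therefore suffices to show that
`∑ y, F (p₀ y) (p₁ y)` is at least the corresponding sum for the three-point pair, for each `α`.

Put `u = (1-w) p₀`, `v = w p₁` and `m = min u v`. Splitting `(u, v) = (m, m) + (u-m, 0) + (0, v-m)`
and using superadditivity gives the pointwise lower bound `chernF_split`, which is linear in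
`(u, v, m)`. After summation it depends only on `M = ∑ m = (1 - ‖u - v‖₁)/2 ≥ a`, and it is
nondecreasing in `M` by superadditivity again. At `M = a` it is exactly the three-point sum.
-/

open Finset Real

/-- The summand `p_{θ₁}(z)^α p_{θ₂}(z)^(1-α)` of the Chernoff sum at a point `z`, as a function
of `x = p₀(z)` and `y = p₁(z)`. -/
noncomputable def chernF (α θ₁ θ₂ x y : ℝ) : ℝ :=
  ((1 - θ₁) * x + θ₁ * y) ^ α * ((1 - θ₂) * x + θ₂ * y) ^ (1 - α)

/-- Hölder's inequality for two terms with exponents `1/α` and `1/(1-α)`. -/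
lemma holder_two {α A B C D : ℝ} (h0 : 0 < α) (h1 : α < 1)
    (hA : 0 ≤ A) (hB : 0 ≤ B) (hC : 0 ≤ C) (hD : 0 ≤ D) :
    A ^ α * C ^ (1 - α) + B ^ α * D ^ (1 - α) ≤ (A + B) ^ α * (C + D) ^ (1 - α) := by
  have h1' : 0 < 1 - α := by linarith
  rcases (add_nonneg hA hB).eq_or_lt with h | hAB
  · have hA0 : A = 0 := by linarith
    have hB0 : B = 0 := by linarith
    simp [hA0, hB0, h0.ne']
  rcases (add_nonneg hC hD).eq_or_lt with h | hCD
  · have hC0 : C = 0 := by linarith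
    have hD0 : D = 0 := by linarith
    simp [hC0, hD0, h1'.ne']
  have k1 : A / (A + B) + B / (A + B) = 1 := by field_simp
  have k2 : C / (C + D) + D / (C + D) = 1 := by field_simp
  -- Weighted AM-GM for the normalised pairs `(A, C)` and `(B, D)`; the two bounds add up to `1`.
  have e1 := Real.geom_mean_le_arith_mean2_weighted h0.le h1'.le
    (div_nonneg hA hAB.le) (div_nonneg hC hCD.le) (by ring)
  have e2 := Real.geom_mean_le_arith_mean2_weighted h0.le h1'.le
    (div_nonneg hB hAB.le) (div_nonneg hD hCD.le) (by ring)
  rw [Real.div_rpow hA hAB.le, Real.div_rpow hC hCD.le] at e1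
  rw [Real.div_rpow hB hAB.le, Real.div_rpow hD hCD.le] at e2
  have hP : 0 < (A + B) ^ α * (C + D) ^ (1 - α) := by positivity
  have e3 : (A ^ α * C ^ (1 - α) + B ^ α * D ^ (1 - α)) /
      ((A + B) ^ α * (C + D) ^ (1 - α)) ≤ 1 := by
    calc _ = A ^ α / (A + B) ^ α * (C ^ (1 - α) / (C + D) ^ (1 - α)) +
          B ^ α / (A + B) ^ α * (D ^ (1 - α) / (C + D) ^ (1 - α)) := by
          rw [div_mul_div_comm, div_mul_div_comm, add_div]
      _ ≤ _ := add_le_add e1 e2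
      _ = α * (A / (A + B) + B / (A + B)) + (1 - α) * (C / (C + D) + D / (C + D)) := by ring
      _ = 1 := by rw [k1, k2]; ring
  rwa [div_le_one hP] at e3

lemma lin_nonneg {θ x y : ℝ} (h : θ ∈ Set.Ioo (0 : ℝ) 1) (hx : 0 ≤ x) (hy : 0 ≤ y) :
    0 ≤ (1 - θ) * x + θ * y :=
  add_nonneg (mul_nonneg (by linarith [h.2]) hx) (mul_nonneg h.1.le hy)

lemma chernF_superadd {α θ₁ θ₂ : ℝ} (h0 : 0 < α) (h1 : α < 1)
    (hθ₁ : θ₁ ∈ Set.Ioo (0 : ℝ) 1) (hθ₂ : θ₂ ∈ Set.Ioo (0 : ℝ) 1)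
    {x y x' y' : ℝ} (hx : 0 ≤ x) (hy : 0 ≤ y) (hx' : 0 ≤ x') (hy' : 0 ≤ y') :
    chernF α θ₁ θ₂ x y + chernF α θ₁ θ₂ x' y' ≤ chernF α θ₁ θ₂ (x + x') (y + y') := by
  have := holder_two h0 h1 (lin_nonneg hθ₁ hx hy) (lin_nonneg hθ₁ hx' hy')
    (lin_nonneg hθ₂ hx hy) (lin_nonneg hθ₂ hx' hy')
  unfold chernF
  convert this using 3 <;> ring

lemma chernF_smul {α θ₁ θ₂ : ℝ}
    (hθ₁ : θ₁ ∈ Set.Ioo (0 : ℝ) 1) (hθ₂ : θ₂ ∈ Set.Ioo (0 : ℝ) 1)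
    {t x y : ℝ} (ht : 0 ≤ t) (hx : 0 ≤ x) (hy : 0 ≤ y) :
    chernF α θ₁ θ₂ (t * x) (t * y) = t * chernF α θ₁ θ₂ x y := by
  unfold chernF
  have e (θ : ℝ) : (1 - θ) * (t * x) + θ * (t * y) = t * ((1 - θ) * x + θ * y) := by ring
  rw [e, e, Real.mul_rpow ht (lin_nonneg hθ₁ hx hy), Real.mul_rpow ht (lin_nonneg hθ₂ hx hy)]
  have : t ^ α * t ^ (1 - α) = t := by
    rw [← Real.rpow_add' ht (by simp)]; simp
  calc _ = (t ^ α * t ^ (1 - α)) * (((1 - θ₁) * x + θ₁ * y) ^ α *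
        ((1 - θ₂) * x + θ₂ * y) ^ (1 - α)) := by ring
    _ = _ := by rw [this]

/-- Lower bound from the splitting `(u, v) = (m, m) + (u - m, 0) + (0, v - m)`, in the coordinates
`u = x / c`, `v = y / d`; it is applied with `c = 1/(1-w)` and `d = 1/w`. -/
lemma chernF_split {α θ₁ θ₂ : ℝ} (h0 : 0 < α) (h1 : α < 1)
    (hθ₁ : θ₁ ∈ Set.Ioo (0 : ℝ) 1) (hθ₂ : θ₂ ∈ Set.Ioo (0 : ℝ) 1)
    {c d u v m : ℝ} (hc : 0 ≤ c) (hd : 0 ≤ d) (hm : 0 ≤ m) (hu : m ≤ u)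
    (hv : m ≤ v) :
    m * chernF α θ₁ θ₂ c d + (u - m) * chernF α θ₁ θ₂ c 0 + (v - m) * chernF α θ₁ θ₂ 0 d
      ≤ chernF α θ₁ θ₂ (u * c) (v * d) := by
  have hu' := sub_nonneg.2 hu
  have hv' := sub_nonneg.2 hv
  rw [← chernF_smul hθ₁ hθ₂ hm hc hd, ← chernF_smul hθ₁ hθ₂ hu' hc le_rfl,
    ← chernF_smul hθ₁ hθ₂ hv' le_rfl hd, mul_zero, mul_zero]
  have e1 := chernF_superadd h0 h1 hθ₁ hθ₂ (mul_nonneg hm hc) (mul_nonneg hm hd)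
    (mul_nonneg hu' hc) le_rfl
  have e2 := chernF_superadd h0 h1 hθ₁ hθ₂
    (add_nonneg (mul_nonneg hm hc) (mul_nonneg hu' hc))
    (add_nonneg (mul_nonneg hm hd) le_rfl) le_rfl (mul_nonneg hv' hd)
  have k1 : m * c + (u - m) * c + 0 = u * c := by ring
  have k2 : m * d + 0 + (v - m) * d = v * d := by ring
  rw [k1, k2] at e2
  linarith

/-- The Chernoff sum of any admissible pair dominates the sum of the three-point pair. -/
lemma chern_sum_ge {Y : Type*} [Fintype Y] {α θ₁ θ₂ : ℝ} (h0 : 0 < α) (h1 : α < 1)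
    (hθ₁ : θ₁ ∈ Set.Ioo (0 : ℝ) 1) (hθ₂ : θ₂ ∈ Set.Ioo (0 : ℝ) 1)
    {a w : ℝ} (ha : 0 < a) (hw : a ≤ w) (hw' : w ≤ 1 - a)
    {p0 p1 : Y → ℝ} (hp0 : IsDist p0) (hp1 : IsDist p1) (hl : l1W w p0 p1 ≤ 1 - 2 * a) :
    a * chernF α θ₁ θ₂ (1 - w)⁻¹ w⁻¹ + (1 - w - a) * chernF α θ₁ θ₂ (1 - w)⁻¹ 0
      + (w - a) * chernF α θ₁ θ₂ 0 w⁻¹ ≤ ∑ y, chernF α θ₁ θ₂ (p0 y) (p1 y) := by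
  have hwp : 0 < w := by linarith
  have hwp' : 0 < 1 - w := by linarith
  have hc := (inv_pos.2 hwp').le
  have hd := (inv_pos.2 hwp).le
  set m : Y → ℝ := fun y => min ((1 - w) * p0 y) (w * p1 y) with hm
  have hM : a ≤ ∑ y, m y := by
    have e (y : Y) : |(1 - w) * p0 y - w * p1 y| = (1 - w) * p0 y + w * p1 y - 2 * m y := by
      simp only [hm]
      rcases le_total ((1 - w) * p0 y) (w * p1 y) with h | h
      · rw [min_eq_left h, abs_of_nonpos (by linarith)]; ring
      · rw [min_eq_right h, abs_of_nonneg (by linarith)]; ring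
    unfold l1W at hl
    simp only [e, Finset.sum_sub_distrib, Finset.sum_add_distrib, ← Finset.mul_sum,
      hp0.2, hp1.2] at hl
    linarith
  have hG : chernF α θ₁ θ₂ (1 - w)⁻¹ 0 + chernF α θ₁ θ₂ 0 w⁻¹
      ≤ chernF α θ₁ θ₂ (1 - w)⁻¹ w⁻¹ := by
    simpa using chernF_superadd h0 h1 hθ₁ hθ₂ hc le_rfl le_rfl hd
  have hs := Finset.sum_le_sum fun y (_ : y ∈ Finset.univ) =>
    chernF_split h0 h1 hθ₁ hθ₂ (u := (1 - w) * p0 y) (v := w * p1 y) (m := m y) hc hd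
      (le_min (mul_nonneg hwp'.le (hp0.1 y)) (mul_nonneg hwp.le (hp1.1 y)))
      (min_le_left _ _) (min_le_right _ _)
  have r0 (y : Y) : (1 - w) * p0 y * (1 - w)⁻¹ = p0 y := by field_simp
  have r1 (y : Y) : w * p1 y * w⁻¹ = p1 y := by field_simp
  simp only [r0, r1, Finset.sum_add_distrib, ← Finset.sum_mul, Finset.sum_sub_distrib,
    ← Finset.mul_sum, hp0.2, hp1.2] at hs
  nlinarith [mul_nonneg (sub_nonneg.2 hM) (sub_nonneg.2 hG)]

/-- The convention for vanishing terms in `renyi` is automatic, since `0 ^ (1 + s) = 0`. -/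
lemma neg_mul_renyi {Y : Type*} [Fintype Y] {s : ℝ} (hs : s ∈ Set.Ioo (-1 : ℝ) 0) (θ₁ θ₂ : ℝ)
    (p0 p1 : Y → ℝ) :
    (-s) * renyi s (mix θ₁ p0 p1) (mix θ₂ p0 p1)
      = -Real.log (∑ y, chernF (1 + s) θ₁ θ₂ (p0 y) (p1 y)) := by
  have hs0 : s ≠ 0 := hs.2.ne
  have h1s : 1 + s ≠ 0 := by linarith [hs.1]
  have e : (∑ y, if mix θ₁ p0 p1 y = 0 ∧ mix θ₂ p0 p1 y = 0 then 0 else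
      mix θ₁ p0 p1 y ^ (1 + s) * mix θ₂ p0 p1 y ^ (-s))
      = ∑ y, chernF (1 + s) θ₁ θ₂ (p0 y) (p1 y) := by
    refine Finset.sum_congr rfl fun y _ => ?_
    have k : 1 - (1 + s) = -s := by ring
    change _ = mix θ₁ p0 p1 y ^ (1 + s) * mix θ₂ p0 p1 y ^ (1 - (1 + s))
    rw [k]
    split_ifs with h
    · rw [h.1, Real.zero_rpow h1s, zero_mul]
    · rfl
  rw [renyi, e]
  field_simp

theorem stmt18 (δ θ₁ θ₂ a w : ℝ) (hδ : δ ∈ Set.Ioo (0 : ℝ) 1)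
    (hθ₁ : θ₁ ∈ Set.Ioo (0 : ℝ) 1) (hθ₂ : θ₂ ∈ Set.Ioo (0 : ℝ) 1)
    (ha : a = (1 - δ) / 2) (hw : a ≤ w) (hw' : w ≤ 1 - a)
    (pb0 pb1 : Fin 3 → ℝ)
    (hpb0 : pb0 = ![a / (1 - w), 1 - a / (1 - w), 0])
    (hpb1 : pb1 = ![a / w, 0, 1 - a / w]) :
    ∀ (Y : Type) [Fintype Y], ∀ p0 p1 : Y → ℝ, IsDist p0 → IsDist p1 →
      l1W w p0 p1 ≤ δ →
      sSup ((fun s => (-s) * renyi s (mix θ₁ p0 p1) (mix θ₂ p0 p1)) '' Set.Ioo (-1 : ℝ) 0)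
        ≤ sSup ((fun s => (-s) * renyi s (mix θ₁ pb0 pb1) (mix θ₂ pb0 pb1)) ''
            Set.Ioo (-1 : ℝ) 0) := by
  intro Y _ p0 p1 hp0 hp1 hl
  have ha0 : 0 < a := by rw [ha]; linarith [hδ.2]
  have hwp : 0 < w := by linarith
  have hwp' : 0 < 1 - w := by linarith
  have hl' : l1W w p0 p1 ≤ 1 - 2 * a := by rw [ha]; linarith
  have hc : 0 < (1 - w)⁻¹ := inv_pos.2 hwp'
  have hd : 0 < w⁻¹ := inv_pos.2 hwp
  have hbar (α : ℝ) : ∑ i, chernF α θ₁ θ₂ (pb0 i) (pb1 i)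
      = a * chernF α θ₁ θ₂ (1 - w)⁻¹ w⁻¹ + (1 - w - a) * chernF α θ₁ θ₂ (1 - w)⁻¹ 0
      + (w - a) * chernF α θ₁ θ₂ 0 w⁻¹ := by
    have k0 : 1 - a / (1 - w) = (1 - w - a) * (1 - w)⁻¹ := by field_simp
    have k1 : 1 - a / w = (w - a) * w⁻¹ := by field_simp
    rw [← chernF_smul hθ₁ hθ₂ ha0.le hc.le hd.le,
      ← chernF_smul hθ₁ hθ₂ (by linarith) hc.le le_rfl,
      ← chernF_smul hθ₁ hθ₂ (by linarith) le_rfl hd.le]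
    simp [Fin.sum_univ_three, hpb0, hpb1, ← k0, ← k1, div_eq_mul_inv]
  -- The first atom alone keeps the three-point sum above a positive constant independent of `s`.
  obtain ⟨c, hc0, hcS⟩ : ∃ c > 0, ∀ s ∈ Set.Ioo (-1 : ℝ) 0,
      c ≤ ∑ i, chernF (1 + s) θ₁ θ₂ (pb0 i) (pb1 i) := by
    have q1 : 0 < (1 - θ₁) * (1 - w)⁻¹ + θ₁ * w⁻¹ :=
      add_pos (mul_pos (by linarith [hθ₁.2]) hc) (mul_pos hθ₁.1 hd)
    have q2 : 0 < (1 - θ₂) * (1 - w)⁻¹ + θ₂ * w⁻¹ :=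
      add_pos (mul_pos (by linarith [hθ₂.2]) hc) (mul_pos hθ₂.1 hd)
    set b := min ((1 - θ₁) * (1 - w)⁻¹ + θ₁ * w⁻¹) ((1 - θ₂) * (1 - w)⁻¹ + θ₂ * w⁻¹) with hb
    have hb0 : 0 < b := lt_min q1 q2
    refine ⟨a * b, mul_pos ha0 hb0, fun s hs => ?_⟩
    have hF : b ≤ chernF (1 + s) θ₁ θ₂ (1 - w)⁻¹ w⁻¹ := by
      calc b = b ^ (1 + s) * b ^ (1 - (1 + s)) := by rw [← Real.rpow_add hb0]; simp
        _ ≤ _ := mul_le_mul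
          (Real.rpow_le_rpow hb0.le (min_le_left _ _) (by linarith [hs.1]))
          (Real.rpow_le_rpow hb0.le (min_le_right _ _) (by linarith [hs.2]))
          (by positivity) (by positivity)
    have n1 : 0 ≤ chernF (1 + s) θ₁ θ₂ (1 - w)⁻¹ 0 :=
      mul_nonneg (Real.rpow_nonneg (lin_nonneg hθ₁ hc.le le_rfl) _)
        (Real.rpow_nonneg (lin_nonneg hθ₂ hc.le le_rfl) _)
    have n2 : 0 ≤ chernF (1 + s) θ₁ θ₂ 0 w⁻¹ :=
      mul_nonneg (Real.rpow_nonneg (lin_nonneg hθ₁ le_rfl hd.le) _)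
        (Real.rpow_nonneg (lin_nonneg hθ₂ le_rfl hd.le) _)
    rw [hbar]
    have t0 := mul_le_mul_of_nonneg_left hF ha0.le
    have t1 := mul_nonneg (show 0 ≤ 1 - w - a by linarith) n1
    have t2 := mul_nonneg (show 0 ≤ w - a by linarith) n2
    linarith
  refine csSup_le (Set.Nonempty.image _ ⟨-1 / 2, by norm_num, by norm_num⟩) ?_
  rintro _ ⟨s, hs, rfl⟩
  refine le_trans ?_ (le_csSup ⟨-Real.log c, ?_⟩ ⟨s, hs, rfl⟩)
  · simp only [neg_mul_renyi hs]
    refine neg_le_neg (Real.log_le_log (hc0.trans_le (hcS s hs)) ?_)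
    rw [hbar]
    exact chern_sum_ge (by linarith [hs.1]) (by linarith [hs.2]) hθ₁ hθ₂ ha0 hw hw' hp0 hp1 hl'
  · rintro _ ⟨t, ht, rfl⟩
    simp only [neg_mul_renyi ht]
    exact neg_le_neg (Real.log_le_log hc0 (hcS t ht))
end
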